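/- Carleman estimate with linear weight for the acoustic Helmholtz operator (Proposition 5.1, classical formulation): Let n ≥ 2, κ > 1 and k ≥ 1. Let q : ℝⁿ → ℝ be C¹ with κ⁻¹ ≤ q(x) ≤ κ and ∇q(x)·x ≥ 0 for all x. Then there exist τ₀ > 0 and C > 0, depending only on n and κ, such that for every τ ≥ τ₀, every C² function u : ℝⁿ → ℝ with compact support contained in B₂ \ closure(B₁), every C¹ vector field F = (F¹,…,Fⁿ) with compact support contained in B₂ \ closure(B₁), and every continuous f : ℝⁿ → ℝ supported in B₂ \ closure(B₁) satisfying Δu(x) + k²q(x)u(x) = f(x) + Σⱼ ∂ⱼFʲ(x) for all x, one has τ·(∫ |x|^{2τ} u(x)² dx)^{1/2} + (∫ |x|^{2τ+2} |∇u(x)|² dx)^{1/2} + τ^{1/2} k (∫ q(x)|x|^{2τ+2} u(x)² dx)^{1/2} ≤ C [ (∫ |x|^{2τ+4} f(x)² dx)^{1/2} + max(τ,k) Σⱼ (∫ |x|^{2τ+2} Fʲ(x)² dx)^{1/2} ], all integrals being over ℝⁿ. -/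

import Mathlib

open MeasureTheory Real
open scoped InnerProductSpace

/-- The `j`-th partial derivative of `u : ℝⁿ → ℝ`. -/
noncomputable def pderiv' {n : ℕ} (j : Fin n) (u : EuclideanSpace ℝ (Fin n) → ℝ)
    (x : EuclideanSpace ℝ (Fin n)) : ℝ :=
  fderiv ℝ u x (EuclideanSpace.single j 1)

/-- The Laplacian of `u : ℝⁿ → ℝ`, as the sum of the second partial derivatives. -/
noncomputable def lap {n : ℕ} (u : EuclideanSpace ℝ (Fin n) → ℝ)
    (x : EuclideanSpace ℝ (Fin n)) : ℝ :=
  ∑ j : Fin n, pderiv' j (pderiv' j u) x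


section Calc
variable {n : ℕ}

lemma pd_mul (j : Fin n) {f g : EuclideanSpace ℝ (Fin n) → ℝ} (x : EuclideanSpace ℝ (Fin n))
    (hf : DifferentiableAt ℝ f x) (hg : DifferentiableAt ℝ g x) :
    pderiv' j (fun y => f y * g y) x = f x * pderiv' j g x + pderiv' j f x * g x := by
  unfold pderiv'
  rw [fderiv_fun_mul hf hg]
  simp [mul_comm]

lemma pd_add (j : Fin n) {f g : EuclideanSpace ℝ (Fin n) → ℝ} (x : EuclideanSpace ℝ (Fin n))
    (hf : DifferentiableAt ℝ f x) (hg : DifferentiableAt ℝ g x) :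
    pderiv' j (fun y => f y + g y) x = pderiv' j f x + pderiv' j g x := by
  unfold pderiv'
  rw [fderiv_fun_add hf hg]
  simp

lemma pd_sub (j : Fin n) {f g : EuclideanSpace ℝ (Fin n) → ℝ} (x : EuclideanSpace ℝ (Fin n))
    (hf : DifferentiableAt ℝ f x) (hg : DifferentiableAt ℝ g x) :
    pderiv' j (fun y => f y - g y) x = pderiv' j f x - pderiv' j g x := by
  unfold pderiv'
  rw [fderiv_fun_sub hf hg]
  simp

lemma pd_const_mul (j : Fin n) {f : EuclideanSpace ℝ (Fin n) → ℝ} (x : EuclideanSpace ℝ (Fin n))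
    (c : ℝ) (hf : DifferentiableAt ℝ f x) :
    pderiv' j (fun y => c * f y) x = c * pderiv' j f x := by
  unfold pderiv'
  rw [fderiv_const_mul hf]
  simp

lemma pd_sum {ι : Type*} (s : Finset ι) (j : Fin n) {f : ι → EuclideanSpace ℝ (Fin n) → ℝ}
    (x : EuclideanSpace ℝ (Fin n)) (hf : ∀ i ∈ s, DifferentiableAt ℝ (f i) x) :
    pderiv' j (fun y => ∑ i ∈ s, f i y) x = ∑ i ∈ s, pderiv' j (f i) x := by
  unfold pderiv'
  rw [fderiv_fun_sum hf]
  simp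

lemma pd_coord (i j : Fin n) (x : EuclideanSpace ℝ (Fin n)) :
    pderiv' j (fun y => y i) x = if i = j then 1 else 0 := by
  unfold pderiv'
  have h : HasFDerivAt (fun y : EuclideanSpace ℝ (Fin n) => y i)
      (EuclideanSpace.proj (𝕜 := ℝ) i) x := (EuclideanSpace.proj (𝕜 := ℝ) i).hasFDerivAt
  rw [h.fderiv]
  simp

lemma diff_coord (i : Fin n) : ContDiff ℝ 2 (fun y : EuclideanSpace ℝ (Fin n) => y i) :=
  (EuclideanSpace.proj (𝕜 := ℝ) i).contDiff

lemma pd_norm (j : Fin n) (x : EuclideanSpace ℝ (Fin n)) {p : ℝ} (hp : 1 < p) :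
    pderiv' j (fun y => ‖y‖ ^ p) x = p * ‖x‖ ^ (p - 2) * x j := by
  unfold pderiv'
  rw [(hasFDerivAt_norm_rpow x hp).fderiv]
  simp [innerSL_apply_apply, EuclideanSpace.inner_single_right]

lemma pd_contDiff (j : Fin n) {u : EuclideanSpace ℝ (Fin n) → ℝ} {m k : ℕ∞} (hu : ContDiff ℝ k u)
    (hm : m + 1 ≤ k) : ContDiff ℝ m (pderiv' j u) := by
  unfold pderiv'
  have : ContDiff ℝ m (fderiv ℝ u) := hu.fderiv_right (by exact_mod_cast hm)
  exact this.clm_apply contDiff_const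

lemma pd_symm (i j : Fin n) {u : EuclideanSpace ℝ (Fin n) → ℝ} (hu : ContDiff ℝ 2 u)
    (x : EuclideanSpace ℝ (Fin n)) : pderiv' i (pderiv' j u) x = pderiv' j (pderiv' i u) x := by
  have hs : IsSymmSndFDerivAt ℝ u x := hu.contDiffAt.isSymmSndFDerivAt (by simp)
  have hd : DifferentiableAt ℝ (fderiv ℝ u) x :=
    ((hu.fderiv_right (m := 1) (by norm_num)).differentiable (by norm_num)).differentiableAt
  have key : ∀ a b : Fin n, pderiv' a (pderiv' b u) x
      = fderiv ℝ (fderiv ℝ u) x (EuclideanSpace.single a 1) (EuclideanSpace.single b 1) := by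
    intro a b
    unfold pderiv'
    rw [fderiv_clm_apply hd (by fun_prop)]
    simp
  rw [key, key]
  exact hs _ _

lemma pd_supp (j : Fin n) {u : EuclideanSpace ℝ (Fin n) → ℝ} (hu : HasCompactSupport u) :
    HasCompactSupport (pderiv' j u) := by
  unfold pderiv'
  exact hu.fderiv_apply (𝕜 := ℝ) _

lemma pd_tsupp (j : Fin n) (u : EuclideanSpace ℝ (Fin n) → ℝ) :
    tsupport (pderiv' j u) ⊆ tsupport u := by
  unfold pderiv'
  exact tsupport_fderiv_apply_subset ℝ _

lemma int_pd (j : Fin n) {u : EuclideanSpace ℝ (Fin n) → ℝ} (hu : ContDiff ℝ 1 u)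
    (hc : HasCompactSupport u) : ∫ x, pderiv' j u x = 0 := by
  have hcont : Continuous (pderiv' j u) :=
    (pd_contDiff (m := 0) (k := 1) j (by exact_mod_cast hu) (by norm_num)).continuous
  have h1 : Integrable (fun x => pderiv' j u x) := hcont.integrable_of_hasCompactSupport (pd_supp j hc)
  have h2 : Integrable u := hu.continuous.integrable_of_hasCompactSupport hc
  have := integral_mul_fderiv_eq_neg_fderiv_mul_of_integrable (μ := volume)
    (f := fun _ : EuclideanSpace ℝ (Fin n) => (1:ℝ)) (g := u)
    (v := EuclideanSpace.single j 1) (by simp) (by simpa [pderiv'] using h1) (by simpa using h2)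
    (by intros; fun_prop) (fun x _ => hu.differentiable (by norm_num) x)
  simpa [pderiv'] using this

lemma int_div {V : Fin n → EuclideanSpace ℝ (Fin n) → ℝ} (hV : ∀ j, ContDiff ℝ 1 (V j))
    (hc : ∀ j, HasCompactSupport (V j)) : ∫ x, ∑ j, pderiv' j (V j) x = 0 := by
  rw [integral_finsetSum]
  · exact Finset.sum_eq_zero fun j _ => int_pd j (hV j) (hc j)
  · intro j _
    exact (pd_contDiff (m := 0) (k := 1) j (by exact_mod_cast hV j)
      (by norm_num)).continuous.integrable_of_hasCompactSupport (pd_supp j (hc j))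

lemma grad_coord (u : EuclideanSpace ℝ (Fin n) → ℝ) (x : EuclideanSpace ℝ (Fin n)) (j : Fin n) :
    gradient u x j = pderiv' j u x := by
  have : ⟪gradient u x, EuclideanSpace.single j 1⟫_ℝ = pderiv' j u x := by
    unfold gradient pderiv'
    simp
  rw [← this, EuclideanSpace.inner_single_right]
  simp

lemma grad_norm (u : EuclideanSpace ℝ (Fin n) → ℝ) (x : EuclideanSpace ℝ (Fin n)) :
    ‖gradient u x‖ ^ 2 = ∑ j, pderiv' j u x ^ 2 := by
  rw [EuclideanSpace.norm_sq_eq]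
  simp [grad_coord]

lemma grad_inner (u : EuclideanSpace ℝ (Fin n) → ℝ) (x : EuclideanSpace ℝ (Fin n)) :
    ⟪gradient u x, x⟫_ℝ = ∑ j, x j * pderiv' j u x := by
  rw [PiLp.inner_apply]
  simp [grad_coord]

end Calc

section Carl
variable {n : ℕ}

/-- Euler field applied to `u`. -/
noncomputable def eul (u : EuclideanSpace ℝ (Fin n) → ℝ) (x : EuclideanSpace ℝ (Fin n)) : ℝ :=
  ∑ i, x i * pderiv' i u x

/-- The multiplier. -/
noncomputable def mlt (σ : ℝ) (u : EuclideanSpace ℝ (Fin n) → ℝ) (x : EuclideanSpace ℝ (Fin n)) :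
    ℝ := eul u x + σ * u x

lemma pd_cd1 (j : Fin n) {u : EuclideanSpace ℝ (Fin n) → ℝ} (hu : ContDiff ℝ 2 u) :
    ContDiff ℝ 1 (pderiv' j u) := by
  have := pd_contDiff (m := 1) (k := 2) j (by exact_mod_cast hu) (by norm_num)
  exact_mod_cast this

lemma pd_cont (j : Fin n) {u : EuclideanSpace ℝ (Fin n) → ℝ} (hu : ContDiff ℝ 1 u) :
    Continuous (pderiv' j u) :=
  (pd_contDiff (m := 0) (k := 1) j (by exact_mod_cast hu) (by norm_num)).continuous

lemma coord_cd (i : Fin n) : ContDiff ℝ 1 (fun y : EuclideanSpace ℝ (Fin n) => y i) :=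
  (diff_coord i).of_le (by norm_num)

lemma eul_cd {u : EuclideanSpace ℝ (Fin n) → ℝ} (hu : ContDiff ℝ 2 u) :
    ContDiff ℝ 1 (eul u) := by
  unfold eul
  exact ContDiff.sum fun i _ => (coord_cd i).mul (pd_cd1 i hu)

lemma mlt_cd (σ : ℝ) {u : EuclideanSpace ℝ (Fin n) → ℝ} (hu : ContDiff ℝ 2 u) :
    ContDiff ℝ 1 (mlt σ u) := by
  unfold mlt
  exact (eul_cd hu).add (contDiff_const.mul (hu.of_le (by norm_num)))

lemma dat {f : EuclideanSpace ℝ (Fin n) → ℝ} (hf : ContDiff ℝ 1 f) (x) : DifferentiableAt ℝ f x :=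
  hf.differentiable (by norm_num) x

lemma pd_mlt (σ : ℝ) (j : Fin n) {u : EuclideanSpace ℝ (Fin n) → ℝ} (hu : ContDiff ℝ 2 u)
    (x : EuclideanSpace ℝ (Fin n)) :
    pderiv' j (mlt σ u) x = pderiv' j u x + ∑ i, x i * pderiv' j (pderiv' i u) x
      + σ * pderiv' j u x := by
  have hu1 : ContDiff ℝ 1 u := hu.of_le (by norm_num)
  have e1 : pderiv' j (mlt σ u) x = pderiv' j (fun y => eul u y + σ * u y) x := rfl
  rw [e1, pd_add j x (dat (eul_cd hu) x) (dat (contDiff_const.mul hu1) x),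
    pd_const_mul j x σ (dat hu1 x)]
  congr 1
  have e2 : pderiv' j (eul u) x = pderiv' j (fun y => ∑ i, y i * pderiv' i u y) x := rfl
  rw [e2, pd_sum _ j x (fun i _ => dat ((coord_cd i).mul (pd_cd1 i hu)) x)]
  have : ∀ i, pderiv' j (fun y => y i * pderiv' i u y) x
      = x i * pderiv' j (pderiv' i u) x + (if i = j then pderiv' i u x else 0) := by
    intro i
    rw [pd_mul j x (dat (coord_cd i) x) (dat (pd_cd1 i hu) x), pd_coord]
    split_ifs <;> simp
  simp only [this, Finset.sum_add_distrib]
  simp [add_comm]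

/-- squared gradient -/
noncomputable def gsq (u : EuclideanSpace ℝ (Fin n) → ℝ) (x : EuclideanSpace ℝ (Fin n)) : ℝ :=
  ∑ i, pderiv' i u x * pderiv' i u x

lemma gsq_cd {u : EuclideanSpace ℝ (Fin n) → ℝ} (hu : ContDiff ℝ 2 u) :
    ContDiff ℝ 1 (gsq u) := by
  unfold gsq
  exact ContDiff.sum fun i _ => (pd_cd1 i hu).mul (pd_cd1 i hu)

lemma pd_gsq (j : Fin n) {u : EuclideanSpace ℝ (Fin n) → ℝ} (hu : ContDiff ℝ 2 u)
    (x : EuclideanSpace ℝ (Fin n)) :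
    pderiv' j (gsq u) x = 2 * ∑ i, pderiv' i u x * pderiv' j (pderiv' i u) x := by
  have e2 : pderiv' j (gsq u) x = pderiv' j (fun y => ∑ i, pderiv' i u y * pderiv' i u y) x := rfl
  rw [e2, pd_sum _ j x (fun i _ => dat ((pd_cd1 i hu).mul (pd_cd1 i hu)) x), Finset.mul_sum]
  refine Finset.sum_congr rfl fun i _ => ?_
  rw [pd_mul j x (dat (pd_cd1 i hu) x) (dat (pd_cd1 i hu) x)]
  ring

lemma nrm_sq (x : EuclideanSpace ℝ (Fin n)) : ∑ j, x j * x j = ‖x‖ ^ 2 := by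
  rw [EuclideanSpace.norm_sq_eq]
  simp [sq]

lemma rp (x : EuclideanSpace ℝ (Fin n)) {p : ℝ} (hp : 0 < p) :
    ‖x‖ ^ p * ‖x‖ ^ 2 = ‖x‖ ^ (p + 2) := by
  rw [Real.rpow_add_of_nonneg (norm_nonneg x) hp.le (by norm_num)]
  norm_cast

/-- The vector field. -/
noncomputable def vf (τ σ : ℝ) (u : EuclideanSpace ℝ (Fin n) → ℝ) (j : Fin n)
    (y : EuclideanSpace ℝ (Fin n)) : ℝ :=
  ‖y‖ ^ (2 * τ + 2) * (mlt σ u y * pderiv' j u y)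
    + (-(1/2)) * (‖y‖ ^ (2 * τ + 2) * (gsq u y * y j))
    + ((τ + 1) * σ) * (‖y‖ ^ (2 * τ) * ((u y * u y) * y j))

lemma vf_cd {τ : ℝ} (hτ : 2 ≤ τ) (σ : ℝ) {u : EuclideanSpace ℝ (Fin n) → ℝ} (hu : ContDiff ℝ 2 u)
    (j : Fin n) : ContDiff ℝ 1 (vf τ σ u j) := by
  have hu1 : ContDiff ℝ 1 u := hu.of_le (by norm_num)
  have hR : ContDiff ℝ 1 (fun y : EuclideanSpace ℝ (Fin n) => ‖y‖ ^ (2 * τ + 2)) :=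
    contDiff_norm_rpow (by linarith)
  have hS : ContDiff ℝ 1 (fun y : EuclideanSpace ℝ (Fin n) => ‖y‖ ^ (2 * τ)) :=
    contDiff_norm_rpow (by linarith)
  exact ((hR.mul ((mlt_cd σ hu).mul (pd_cd1 j hu))).add
    (contDiff_const.mul (hR.mul ((gsq_cd hu).mul (coord_cd j))))).add
    (contDiff_const.mul (hS.mul ((hu1.mul hu1).mul (coord_cd j))))

lemma div_vf {τ : ℝ} (hτ : 2 ≤ τ) {σ : ℝ} (hσ : σ = τ + n / 2)
    {u : EuclideanSpace ℝ (Fin n) → ℝ} (hu : ContDiff ℝ 2 u) (x : EuclideanSpace ℝ (Fin n)) :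
    ∑ j, pderiv' j (vf τ σ u j) x = ‖x‖ ^ (2 * τ + 2) * (lap u x * mlt σ u x)
      + (2 * τ + 2) * (‖x‖ ^ (2 * τ) * mlt σ u x ^ 2) := by
  have hu1 : ContDiff ℝ 1 u := hu.of_le (by norm_num)
  have hR : ContDiff ℝ 1 (fun y : EuclideanSpace ℝ (Fin n) => ‖y‖ ^ (2 * τ + 2)) :=
    contDiff_norm_rpow (by linarith)
  have hS : ContDiff ℝ 1 (fun y : EuclideanSpace ℝ (Fin n) => ‖y‖ ^ (2 * τ)) :=
    contDiff_norm_rpow (by linarith)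
  have key : ∀ j, pderiv' j (vf τ σ u j) x =
      ((2 * τ + 2) * ‖x‖ ^ (2 * τ) * mlt σ u x + (2 * τ + 2) * σ * ‖x‖ ^ (2 * τ) * u x)
        * (x j * pderiv' j u x)
      + (‖x‖ ^ (2 * τ + 2) * (1 + σ)) * (pderiv' j u x * pderiv' j u x)
      + ‖x‖ ^ (2 * τ + 2) * (∑ i, x i * pderiv' j (pderiv' i u) x * pderiv' j u x)
      - ‖x‖ ^ (2 * τ + 2) * (∑ i, x j * pderiv' j (pderiv' i u) x * pderiv' i u x)
      + (‖x‖ ^ (2 * τ + 2) * mlt σ u x) * pderiv' j (pderiv' j u) x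
      + (- (τ + 1) * ‖x‖ ^ (2 * τ) * gsq u x
          + (τ + 1) * σ * (2 * τ) * ‖x‖ ^ (2 * τ - 2) * u x ^ 2) * (x j * x j)
      + (-(1/2) * ‖x‖ ^ (2 * τ + 2) * gsq u x + (τ + 1) * σ * ‖x‖ ^ (2 * τ) * u x ^ 2) := by
    intro j
    have e : pderiv' j (vf τ σ u j) x = pderiv' j (fun y => ‖y‖ ^ (2 * τ + 2) * (mlt σ u y * pderiv' j u y)
      + (-(1/2)) * (‖y‖ ^ (2 * τ + 2) * (gsq u y * y j))
      + ((τ + 1) * σ) * (‖y‖ ^ (2 * τ) * ((u y * u y) * y j))) x := rfl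
    have c1 := (mlt_cd σ hu).mul (pd_cd1 j hu)
    have c2 := (gsq_cd hu).mul (coord_cd j)
    have c3 := (hu1.mul hu1).mul (coord_cd j)
    rw [e, pd_add j x (dat ((hR.mul c1).add (contDiff_const.mul (hR.mul c2))) x)
        (dat (contDiff_const.mul (hS.mul c3)) x),
      pd_add j x (dat (hR.mul c1) x) (dat (contDiff_const.mul (hR.mul c2)) x),
      pd_const_mul j x _ (dat (hR.mul c2) x), pd_const_mul j x _ (dat (hS.mul c3) x),
      pd_mul j x (dat hR x) (dat c1 x), pd_mul j x (dat hR x) (dat c2 x),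
      pd_mul j x (dat hS x) (dat c3 x), pd_mul j x (dat (mlt_cd σ hu) x) (dat (pd_cd1 j hu) x),
      pd_mul j x (dat (gsq_cd hu) x) (dat (coord_cd j) x),
      pd_mul j x (dat (hu1.mul hu1) x) (dat (coord_cd j) x),
      pd_mul j x (dat hu1 x) (dat hu1 x), pd_mlt σ j hu, pd_gsq j hu, pd_coord, if_pos rfl,
      pd_norm j x (by linarith), pd_norm j x (by linarith)]
    have s1 : ∑ i, x i * pderiv' j (pderiv' i u) x * pderiv' j u x
        = (∑ i, x i * pderiv' j (pderiv' i u) x) * pderiv' j u x := by rw [Finset.sum_mul]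
    have s2 : ∑ i, x j * pderiv' j (pderiv' i u) x * pderiv' i u x
        = x j * (∑ i, pderiv' i u x * pderiv' j (pderiv' i u) x) := by
      rw [Finset.mul_sum]; exact Finset.sum_congr rfl fun i _ => by ring
    rw [s1, s2]
    have e3 : 2 * τ + 2 - 2 = 2 * τ := by ring
    rw [e3]
    ring
  have hswap : ∑ j, ∑ i, x j * pderiv' j (pderiv' i u) x * pderiv' i u x
      = ∑ j, ∑ i, x i * pderiv' j (pderiv' i u) x * pderiv' j u x := by
    rw [Finset.sum_comm]
    refine Finset.sum_congr rfl fun i _ => Finset.sum_congr rfl fun j _ => ?_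
    rw [pd_symm j i hu]
  simp only [key, Finset.sum_add_distrib, Finset.sum_sub_distrib, ← Finset.mul_sum]
  rw [hswap, nrm_sq]
  have r1 : ‖x‖ ^ (2 * τ - 2) * ‖x‖ ^ 2 = ‖x‖ ^ (2 * τ) := by
    rw [rp x (by linarith)]; congr 1; ring
  have r2 : ‖x‖ ^ (2 * τ) * ‖x‖ ^ 2 = ‖x‖ ^ (2 * τ + 2) := rp x (by linarith)
  have h1 : ∑ j, x j * pderiv' j u x = mlt σ u x - σ * u x := by unfold mlt eul; ring
  have h2 : ∑ j, pderiv' j u x * pderiv' j u x = gsq u x := rfl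
  have h3 : ∑ j, pderiv' j (pderiv' j u) x = lap u x := rfl
  rw [h1, h2, h3]
  simp only [Finset.sum_const, Finset.card_univ, Fintype.card_fin, nsmul_eq_mul]
  have hn : (n : ℝ) = 2 * (σ - τ) := by rw [hσ]; ring
  rw [hn]
  linear_combination ((τ + 1) * σ * (2 * τ) * u x ^ 2) * r1 - (τ + 1) * gsq u x * r2

/-- Second field. -/
noncomputable def vq (τ : ℝ) (q u : EuclideanSpace ℝ (Fin n) → ℝ) (j : Fin n)
    (y : EuclideanSpace ℝ (Fin n)) : ℝ :=
  ‖y‖ ^ (2 * τ + 2) * (q y * ((u y * u y) * y j))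

lemma vq_cd {τ : ℝ} (hτ : 2 ≤ τ) {q u : EuclideanSpace ℝ (Fin n) → ℝ} (hu : ContDiff ℝ 1 u)
    (hq : ContDiff ℝ 1 q) (j : Fin n) : ContDiff ℝ 1 (vq τ q u j) := by
  have hR : ContDiff ℝ 1 (fun y : EuclideanSpace ℝ (Fin n) => ‖y‖ ^ (2 * τ + 2)) :=
    contDiff_norm_rpow (by linarith)
  exact hR.mul (hq.mul ((hu.mul hu).mul (coord_cd j)))

lemma div_vq {τ : ℝ} (hτ : 2 ≤ τ) {σ : ℝ} (hσ : σ = τ + n / 2)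
    {q u : EuclideanSpace ℝ (Fin n) → ℝ} (hu : ContDiff ℝ 1 u) (hq : ContDiff ℝ 1 q)
    (x : EuclideanSpace ℝ (Fin n)) :
    ∑ j, pderiv' j (vq τ q u j) x = 2 * (‖x‖ ^ (2 * τ + 2) * (q x * u x * mlt σ u x))
      + 2 * (q x * ‖x‖ ^ (2 * τ + 2) * u x ^ 2) + ‖x‖ ^ (2 * τ + 2) * u x ^ 2 * eul q x := by
  have hR : ContDiff ℝ 1 (fun y : EuclideanSpace ℝ (Fin n) => ‖y‖ ^ (2 * τ + 2)) :=
    contDiff_norm_rpow (by linarith)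
  have key : ∀ j, pderiv' j (vq τ q u j) x =
      (‖x‖ ^ (2 * τ + 2) * u x ^ 2) * (x j * pderiv' j q x)
      + (2 * ‖x‖ ^ (2 * τ + 2) * q x * u x) * (x j * pderiv' j u x)
      + ((2 * τ + 2) * ‖x‖ ^ (2 * τ) * q x * u x ^ 2) * (x j * x j)
      + ‖x‖ ^ (2 * τ + 2) * q x * u x ^ 2 := by
    intro j
    have e : pderiv' j (vq τ q u j) x
      = pderiv' j (fun y => ‖y‖ ^ (2 * τ + 2) * (q y * ((u y * u y) * y j))) x := rfl
    have c1 := (hu.mul hu).mul (coord_cd j)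
    rw [e, pd_mul j x (dat hR x) (dat (hq.mul c1) x), pd_mul j x (dat hq x) (dat c1 x),
      pd_mul j x (dat (hu.mul hu) x) (dat (coord_cd j) x), pd_mul j x (dat hu x) (dat hu x),
      pd_coord, if_pos rfl, pd_norm j x (by linarith)]
    have e3 : 2 * τ + 2 - 2 = 2 * τ := by ring
    rw [e3]
    ring
  simp only [key, Finset.sum_add_distrib, ← Finset.mul_sum]
  rw [nrm_sq]
  have r2 : ‖x‖ ^ (2 * τ) * ‖x‖ ^ 2 = ‖x‖ ^ (2 * τ + 2) := rp x (by linarith)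
  have h1 : ∑ j, x j * pderiv' j u x = mlt σ u x - σ * u x := by unfold mlt eul; ring
  have h2 : ∑ j, x j * pderiv' j q x = eul q x := rfl
  rw [h1, h2]
  simp only [Finset.sum_const, Finset.card_univ, Fintype.card_fin, nsmul_eq_mul]
  have hn : (n : ℝ) = 2 * (σ - τ) := by rw [hσ]; ring
  rw [hn]
  linear_combination ((2 * τ + 2) * q x * u x ^ 2) * r2

end Carl

section Est
variable {n : ℕ}

lemma itg {h : EuclideanSpace ℝ (Fin n) → ℝ} (hh : Continuous h)
    {K : Set (EuclideanSpace ℝ (Fin n))} (hK : IsCompact K) (h0 : ∀ x, x ∉ K → h x = 0) :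
    Integrable h :=
  hh.integrable_of_hasCompactSupport (HasCompactSupport.intro hK h0)

lemma iadd {f g : EuclideanSpace ℝ (Fin n) → ℝ} (hf : Integrable f) (hg : Integrable g) :
    Integrable (fun x => f x + g x) := hf.add hg

lemma isub {f g : EuclideanSpace ℝ (Fin n) → ℝ} (hf : Integrable f) (hg : Integrable g) :
    Integrable (fun x => f x - g x) := hf.sub hg

lemma off0 {u : EuclideanSpace ℝ (Fin n) → ℝ} {x} (hx : x ∉ tsupport u) : u x = 0 :=
  image_eq_zero_of_notMem_tsupport hx

lemma off1 (j : Fin n) {u : EuclideanSpace ℝ (Fin n) → ℝ} {x} (hx : x ∉ tsupport u) :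
    pderiv' j u x = 0 :=
  off0 (fun h => hx (pd_tsupp j u h))

lemma off2 (i j : Fin n) {u : EuclideanSpace ℝ (Fin n) → ℝ} {x} (hx : x ∉ tsupport u) :
    pderiv' i (pderiv' j u) x = 0 :=
  off1 i (fun h => hx (pd_tsupp j u h))

lemma offlap {u : EuclideanSpace ℝ (Fin n) → ℝ} {x} (hx : x ∉ tsupport u) : lap u x = 0 := by
  unfold lap
  exact Finset.sum_eq_zero fun j _ => off2 j j hx

lemma offeul {u : EuclideanSpace ℝ (Fin n) → ℝ} {x} (hx : x ∉ tsupport u) : eul u x = 0 := by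
  unfold eul
  exact Finset.sum_eq_zero fun j _ => by rw [off1 j hx, mul_zero]

lemma offmlt (σ : ℝ) {u : EuclideanSpace ℝ (Fin n) → ℝ} {x} (hx : x ∉ tsupport u) :
    mlt σ u x = 0 := by
  unfold mlt; rw [offeul hx, off0 hx]; simp

lemma offgsq {u : EuclideanSpace ℝ (Fin n) → ℝ} {x} (hx : x ∉ tsupport u) : gsq u x = 0 := by
  unfold gsq
  exact Finset.sum_eq_zero fun j _ => by rw [off1 j hx, mul_zero]

lemma lap_cont {u : EuclideanSpace ℝ (Fin n) → ℝ} (hu : ContDiff ℝ 2 u) : Continuous (lap u) := by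
  unfold lap
  exact continuous_finsetSum _ fun j _ => pd_cont j (pd_cd1 j hu)

lemma eul_cont {u : EuclideanSpace ℝ (Fin n) → ℝ} (hu : ContDiff ℝ 1 u) : Continuous (eul u) := by
  unfold eul
  exact continuous_finsetSum _ fun j _ => (coord_cd j).continuous.mul (pd_cont j hu)

lemma wt_cont {p : ℝ} (hp : 0 ≤ p) : Continuous (fun x : EuclideanSpace ℝ (Fin n) => ‖x‖ ^ p) :=
  continuous_norm.rpow_const fun _ => Or.inr hp

lemma carl_L2 {τ : ℝ} (hτ : 2 ≤ τ) (k : ℝ)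
    {q u : EuclideanSpace ℝ (Fin n) → ℝ} (hu : ContDiff ℝ 2 u) (hc : HasCompactSupport u)
    (h3 : ∀ x, u x ≠ 0 → ‖x‖ ≤ 3) (hq : ContDiff ℝ 1 q) (hq0 : ∀ x, 0 ≤ q x)
    (hqe : ∀ x, 0 ≤ eul q x) :
    τ ^ 2 * ∫ x, ‖x‖ ^ (2 * τ + 2) * u x ^ 2
        ≤ 3 * ∫ x, ‖x‖ ^ (2 * τ + 4) * (lap u x + k ^ 2 * q x * u x) ^ 2 ∧
    τ * k ^ 2 * ∫ x, q x * ‖x‖ ^ (2 * τ + 2) * u x ^ 2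
        ≤ ∫ x, ‖x‖ ^ (2 * τ + 4) * (lap u x + k ^ 2 * q x * u x) ^ 2 := by
  obtain ⟨σ, hσ⟩ : ∃ σ : ℝ, σ = τ + n / 2 := ⟨_, rfl⟩
  have hu1 : ContDiff ℝ 1 u := hu.of_le (by norm_num)
  have cu := hu.continuous
  have cq := hq.continuous
  have cm := (mlt_cd σ hu).continuous
  have cl := lap_cont hu
  have cR : Continuous (fun x : EuclideanSpace ℝ (Fin n) => ‖x‖ ^ (2 * τ + 2)) := wt_cont (by linarith)
  have cS : Continuous (fun x : EuclideanSpace ℝ (Fin n) => ‖x‖ ^ (2 * τ)) := wt_cont (by linarith)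
  have cT : Continuous (fun x : EuclideanSpace ℝ (Fin n) => ‖x‖ ^ (2 * τ + 4)) := wt_cont (by linarith)
  have ceq := eul_cont hq
  have iA : Integrable (fun x => ‖x‖ ^ (2 * τ) * mlt σ u x ^ 2) :=
    itg (cS.mul (cm.pow 2)) hc fun x hx => by simp [offmlt σ hx]
  have iB : Integrable (fun x => ‖x‖ ^ (2 * τ + 2) * u x ^ 2) :=
    itg (cR.mul (cu.pow 2)) hc fun x hx => by simp [off0 hx]
  have iQ : Integrable (fun x => q x * ‖x‖ ^ (2 * τ + 2) * u x ^ 2) :=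
    itg ((cq.mul cR).mul (cu.pow 2)) hc fun x hx => by simp [off0 hx]
  have iG : Integrable (fun x => ‖x‖ ^ (2 * τ + 4) * (lap u x + k ^ 2 * q x * u x) ^ 2) :=
    itg (cT.mul ((cl.add ((continuous_const.mul cq).mul cu)).pow 2)) hc fun x hx => by
      simp [off0 hx, offlap hx]
  have z1 : ∫ x, ∑ j, pderiv' j (vf τ σ u j) x = 0 :=
    int_div (vf_cd hτ σ hu) fun j => HasCompactSupport.intro hc fun x hx => by
      simp [vf, off0 hx, offmlt σ hx, offgsq hx]
  have z2 : ∀ p : EuclideanSpace ℝ (Fin n) → ℝ, ContDiff ℝ 1 p →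
      ∫ x, ∑ j, pderiv' j (vq τ p u j) x = 0 := fun p hp =>
    int_div (vq_cd hτ hu1 hp) fun j => HasCompactSupport.intro hc fun x hx => by
      simp [vq, off0 hx]
  have z3 := z2 q hq
  have z4 := z2 (fun _ => 1) contDiff_const
  simp only [div_vf hτ hσ hu] at z1
  simp only [div_vq hτ hσ hu1 hq] at z3
  simp only [div_vq hτ hσ hu1 contDiff_const] at z4
  have e1 : ∀ x : EuclideanSpace ℝ (Fin n), eul (fun _ => (1:ℝ)) x = 0 := by
    intro x; simp [eul, pderiv']
  simp only [e1] at z4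
  have i1 : Integrable (fun x => ‖x‖ ^ (2 * τ + 2) * (lap u x * mlt σ u x)
      + (2 * τ + 2) * (‖x‖ ^ (2 * τ) * mlt σ u x ^ 2)) :=
    (itg (cR.mul (cl.mul cm)) hc fun x hx => by simp [offmlt σ hx]).add (iA.const_mul _)
  have i3 : Integrable (fun x => 2 * (‖x‖ ^ (2 * τ + 2) * (q x * u x * mlt σ u x))
      + 2 * (q x * ‖x‖ ^ (2 * τ + 2) * u x ^ 2) + ‖x‖ ^ (2 * τ + 2) * u x ^ 2 * eul q x) :=
    itg (((continuous_const.mul (cR.mul ((cq.mul cu).mul cm))).add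
      (continuous_const.mul ((cq.mul cR).mul (cu.pow 2)))).add ((cR.mul (cu.pow 2)).mul ceq)) hc
      fun x hx => by simp [off0 hx]
  have i4 : Integrable (fun x => ‖x‖ ^ (2 * τ + 2) * (1 * u x * mlt σ u x)) :=
    itg (cR.mul ((continuous_const.mul cu).mul cm)) hc fun x hx => by simp [off0 hx]
  have rS : ∀ x : EuclideanSpace ℝ (Fin n), ‖x‖ ^ (2 * τ + 2) = ‖x‖ ^ (2 * τ) * ‖x‖ ^ 2 :=
    fun x => (rp x (by linarith)).symm
  have rT : ∀ x : EuclideanSpace ℝ (Fin n), ‖x‖ ^ (2 * τ + 4) = ‖x‖ ^ (2 * τ) * (‖x‖ ^ 2) ^ 2 := by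
    intro x
    have := rp x (p := 2 * τ + 2) (by linarith)
    rw [rS] at this
    rw [show 2 * τ + 4 = 2 * τ + 2 + 2 by ring, ← this]; ring
  have hS0 : ∀ x : EuclideanSpace ℝ (Fin n), 0 ≤ ‖x‖ ^ (2 * τ) := fun x => by positivity
  -- first
  have main : (τ + 1) * (∫ x, ‖x‖ ^ (2 * τ) * mlt σ u x ^ 2)
      + k ^ 2 * (∫ x, q x * ‖x‖ ^ (2 * τ + 2) * u x ^ 2)
      ≤ (1 / (4 * (τ + 1))) * ∫ x, ‖x‖ ^ (2 * τ + 4) * (lap u x + k ^ 2 * q x * u x) ^ 2 := by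
    have : 0 ≤ ∫ x, ((‖x‖ ^ (2 * τ + 2) * (lap u x * mlt σ u x)
      + (2 * τ + 2) * (‖x‖ ^ (2 * τ) * mlt σ u x ^ 2))
      + (k ^ 2 / 2) * (2 * (‖x‖ ^ (2 * τ + 2) * (q x * u x * mlt σ u x))
      + 2 * (q x * ‖x‖ ^ (2 * τ + 2) * u x ^ 2) + ‖x‖ ^ (2 * τ + 2) * u x ^ 2 * eul q x)
      - (((τ + 1) * (‖x‖ ^ (2 * τ) * mlt σ u x ^ 2)
      + k ^ 2 * (q x * ‖x‖ ^ (2 * τ + 2) * u x ^ 2))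
      - (1 / (4 * (τ + 1))) * (‖x‖ ^ (2 * τ + 4) * (lap u x + k ^ 2 * q x * u x) ^ 2))) := by
      refine integral_nonneg fun x => ?_
      simp only [Pi.zero_apply]
      have hE : 0 ≤ k ^ 2 / 2 * (‖x‖ ^ (2 * τ + 2) * u x ^ 2 * eul q x) := by
        have := hqe x
        positivity
      have hsq : 0 ≤ ‖x‖ ^ (2 * τ) * ((τ + 1) *
          (mlt σ u x + 1 / (2 * (τ + 1)) * (‖x‖ ^ 2 * (lap u x + k ^ 2 * q x * u x))) ^ 2) := by
        have := hS0 x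
        have : 0 < τ + 1 := by linarith
        positivity
      have hid : (τ + 1) *
          (mlt σ u x + 1 / (2 * (τ + 1)) * (‖x‖ ^ 2 * (lap u x + k ^ 2 * q x * u x))) ^ 2
          = (τ + 1) * mlt σ u x ^ 2 + mlt σ u x * (‖x‖ ^ 2 * (lap u x + k ^ 2 * q x * u x))
            + 1 / (4 * (τ + 1)) * (‖x‖ ^ 2 * (lap u x + k ^ 2 * q x * u x)) ^ 2 := by
        have : τ + 1 ≠ 0 := by linarith
        field_simp
        ring
      rw [hid] at hsq
      rw [rS] at hE
      rw [rT, rS]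
      linarith
    rw [integral_sub (iadd i1 (i3.const_mul _)) (isub (iadd (iA.const_mul _) (iQ.const_mul _))
      (iG.const_mul _)), integral_add i1 (i3.const_mul _), z1, integral_const_mul, z3,
      integral_sub (iadd (iA.const_mul _) (iQ.const_mul _)) (iG.const_mul _),
      integral_add (iA.const_mul _) (iQ.const_mul _), integral_const_mul, integral_const_mul,
      integral_const_mul] at this
    linarith
  have poin : ∫ x, ‖x‖ ^ (2 * τ + 2) * u x ^ 2 ≤ 9 * ∫ x, ‖x‖ ^ (2 * τ) * mlt σ u x ^ 2 := by
    have z5 : (∫ x, ‖x‖ ^ (2 * τ + 2) * (1 * u x * mlt σ u x))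
        + ∫ x, ‖x‖ ^ (2 * τ + 2) * u x ^ 2 = 0 := by
      rw [← integral_add i4 iB]
      have : (1/2:ℝ) * 0 = 0 := by norm_num
      rw [← this, ← z4, ← integral_const_mul]
      refine integral_congr_ae (Filter.Eventually.of_forall fun x => ?_)
      simp only; ring
    have : 0 ≤ ∫ x, (‖x‖ ^ (2 * τ + 2) * (1 * u x * mlt σ u x)
      + (1/2) * (‖x‖ ^ (2 * τ + 2) * u x ^ 2) + (9/2) * (‖x‖ ^ (2 * τ) * mlt σ u x ^ 2)) := by
      refine integral_nonneg fun x => ?_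
      simp only [Pi.zero_apply]
      rw [rS]
      have h9 : (‖x‖ ^ 2) ^ 2 * u x ^ 2 ≤ 9 * (‖x‖ ^ 2 * u x ^ 2) := by
        by_cases hx : u x = 0
        · simp [hx]
        · have := h3 x hx
          have h0 := norm_nonneg x
          have : ‖x‖ ^ 2 ≤ 9 := by nlinarith
          nlinarith [mul_nonneg (sq_nonneg ‖x‖) (sq_nonneg (u x))]
      have : 0 ≤ ‖x‖ ^ 2 * (u x * mlt σ u x) + 1/2 * (‖x‖ ^ 2 * u x ^ 2) + 9/2 * mlt σ u x ^ 2 := by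
        nlinarith [sq_nonneg (‖x‖ ^ 2 * u x + 9 * mlt σ u x)]
      have := mul_nonneg (hS0 x) this
      linarith
    rw [integral_add (iadd i4 (iB.const_mul _)) (iA.const_mul _), integral_add i4 (iB.const_mul _),
      integral_const_mul, integral_const_mul] at this
    linarith
  have hA0 : 0 ≤ ∫ x, ‖x‖ ^ (2 * τ) * mlt σ u x ^ 2 := integral_nonneg fun x => by
    simp only [Pi.zero_apply]; positivity
  have hQ0 : 0 ≤ ∫ x, q x * ‖x‖ ^ (2 * τ + 2) * u x ^ 2 := integral_nonneg fun x => by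
    have := hq0 x
    simp only [Pi.zero_apply]; positivity
  have hG0 : 0 ≤ ∫ x, ‖x‖ ^ (2 * τ + 4) * (lap u x + k ^ 2 * q x * u x) ^ 2 :=
    integral_nonneg fun x => by
      simp only [Pi.zero_apply]; positivity
  generalize (∫ x, ‖x‖ ^ (2 * τ) * mlt σ u x ^ 2) = A at *
  generalize (∫ x, q x * ‖x‖ ^ (2 * τ + 2) * u x ^ 2) = Q at *
  generalize (∫ x, ‖x‖ ^ (2 * τ + 4) * (lap u x + k ^ 2 * q x * u x) ^ 2) = G at *
  generalize (∫ x, ‖x‖ ^ (2 * τ + 2) * u x ^ 2) = B at *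
  have hp : 0 < τ + 1 := by linarith
  have main' : (τ + 1) * ((τ + 1) * A + k ^ 2 * Q) ≤ G / 4 := by
    have := mul_le_mul_of_nonneg_left main hp.le
    have e : (τ + 1) * (1 / (4 * (τ + 1)) * G) = G / 4 := by field_simp
    rwa [e] at this
  have hkQ : 0 ≤ k ^ 2 * Q := by positivity
  constructor
  · have : τ ^ 2 * A ≤ (τ + 1) * ((τ + 1) * A) := by nlinarith
    nlinarith
  · nlinarith [mul_nonneg hp.le (mul_nonneg hp.le hA0)]

lemma grad_est {τ : ℝ} (hτ : 2 ≤ τ) (k : ℝ)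
    {q u f : EuclideanSpace ℝ (Fin n) → ℝ} {F : Fin n → EuclideanSpace ℝ (Fin n) → ℝ}
    (hu : ContDiff ℝ 2 u) (hc : HasCompactSupport u)
    (h1 : ∀ x, u x ≠ 0 → 1 ≤ ‖x‖) (hq : ContDiff ℝ 1 q)
    (hF : ∀ j, ContDiff ℝ 1 (F j)) (hFc : ∀ j, HasCompactSupport (F j))
    (hf : Continuous f) (hfc : HasCompactSupport f)
    (heq : ∀ x, lap u x + k ^ 2 * q x * u x = f x + ∑ j : Fin n, pderiv' j (F j) x) :
    (1/2) * ∫ x, ‖x‖ ^ (2 * τ + 2) * gsq u x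
      ≤ k ^ 2 * (∫ x, q x * ‖x‖ ^ (2 * τ + 2) * u x ^ 2)
        + (2 * (2 * τ + 2) ^ 2 + 1/2) * (∫ x, ‖x‖ ^ (2 * τ + 2) * u x ^ 2)
        + (1/2) * (∫ x, ‖x‖ ^ (2 * τ + 4) * f x ^ 2)
        + (5/4) * ∑ j, ∫ x, ‖x‖ ^ (2 * τ + 2) * F j x ^ 2 := by
  have hu1 : ContDiff ℝ 1 u := hu.of_le (by norm_num)
  have cu := hu.continuous
  have cq := hq.continuous
  have cR : Continuous (fun x : EuclideanSpace ℝ (Fin n) => ‖x‖ ^ (2 * τ + 2)) := wt_cont (by linarith)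
  have cS : Continuous (fun x : EuclideanSpace ℝ (Fin n) => ‖x‖ ^ (2 * τ)) := wt_cont (by linarith)
  have cT : Continuous (fun x : EuclideanSpace ℝ (Fin n) => ‖x‖ ^ (2 * τ + 4)) := wt_cont (by linarith)
  have hR : ContDiff ℝ 1 (fun y : EuclideanSpace ℝ (Fin n) => ‖y‖ ^ (2 * τ + 2)) :=
    contDiff_norm_rpow (by linarith)
  have rS : ∀ x : EuclideanSpace ℝ (Fin n), ‖x‖ ^ (2 * τ + 2) = ‖x‖ ^ (2 * τ) * ‖x‖ ^ 2 :=
    fun x => (rp x (by linarith)).symm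
  have rT : ∀ x : EuclideanSpace ℝ (Fin n), ‖x‖ ^ (2 * τ + 4) = ‖x‖ ^ (2 * τ) * (‖x‖ ^ 2) ^ 2 := by
    intro x
    have := rp x (p := 2 * τ + 2) (by linarith)
    rw [rS] at this
    rw [show 2 * τ + 4 = 2 * τ + 2 + 2 by ring, ← this]; ring
  have hS0 : ∀ x : EuclideanSpace ℝ (Fin n), 0 ≤ ‖x‖ ^ (2 * τ) := fun x => by positivity
  have iB : Integrable (fun x => ‖x‖ ^ (2 * τ + 2) * u x ^ 2) :=
    itg (cR.mul (cu.pow 2)) hc fun x hx => by simp [off0 hx]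
  have iQ : Integrable (fun x => q x * ‖x‖ ^ (2 * τ + 2) * u x ^ 2) :=
    itg ((cq.mul cR).mul (cu.pow 2)) hc fun x hx => by simp [off0 hx]
  have iP : Integrable (fun x => ‖x‖ ^ (2 * τ + 2) * gsq u x) :=
    itg (cR.mul (gsq_cd hu).continuous) hc fun x hx => by simp [offgsq hx]
  have iF : Integrable (fun x => ‖x‖ ^ (2 * τ + 4) * f x ^ 2) :=
    itg (cT.mul (hf.pow 2)) hfc fun x hx => by simp [off0 hx]
  have iV : ∀ j, Integrable (fun x => ‖x‖ ^ (2 * τ + 2) * F j x ^ 2) := fun j =>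
    itg (cR.mul ((hF j).continuous.pow 2)) (hFc j) fun x hx => by simp [off0 hx]
  have hZ : ∀ j, ContDiff ℝ 1 (fun y => pderiv' j u y - F j y) := fun j => (pd_cd1 j hu).sub (hF j)
  have hW : ∀ j, ContDiff ℝ 1 (fun y => ‖y‖ ^ (2 * τ + 2) * (u y * (pderiv' j u y - F j y))) :=
    fun j => hR.mul (hu1.mul (hZ j))
  have z : ∫ x, ∑ j, pderiv' j (fun y => ‖y‖ ^ (2 * τ + 2) * (u y * (pderiv' j u y - F j y))) x = 0 :=
    int_div hW fun j => HasCompactSupport.intro hc fun x hx => by simp [off0 hx]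
  have hdiv : ∀ x, ∑ j, pderiv' j (fun y => ‖y‖ ^ (2 * τ + 2) * (u y * (pderiv' j u y - F j y))) x
      = ‖x‖ ^ (2 * τ + 2) * (u x * (f x - k ^ 2 * q x * u x))
        + ‖x‖ ^ (2 * τ + 2) * (∑ j, pderiv' j u x * (pderiv' j u x - F j x))
        + (2 * τ + 2) * ‖x‖ ^ (2 * τ) * u x * ∑ j, x j * (pderiv' j u x - F j x) := by
    intro x
    have key : ∀ j, pderiv' j (fun y => ‖y‖ ^ (2 * τ + 2) * (u y * (pderiv' j u y - F j y))) x
        = ‖x‖ ^ (2 * τ + 2) * u x * (pderiv' j (pderiv' j u) x - pderiv' j (F j) x)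
          + ‖x‖ ^ (2 * τ + 2) * (pderiv' j u x * (pderiv' j u x - F j x))
          + (2 * τ + 2) * ‖x‖ ^ (2 * τ) * u x * (x j * (pderiv' j u x - F j x)) := by
      intro j
      rw [pd_mul j x (dat hR x) (dat (hu1.mul (hZ j)) x), pd_mul j x (dat hu1 x) (dat (hZ j) x),
        pd_sub j x (dat (pd_cd1 j hu) x) (dat (hF j) x), pd_norm j x (by linarith)]
      rw [show 2 * τ + 2 - 2 = 2 * τ by ring]
      ring
    simp only [key, Finset.sum_add_distrib, ← Finset.mul_sum, Finset.sum_sub_distrib]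
    have : ∑ j, pderiv' j (pderiv' j u) x = f x + (∑ j, pderiv' j (F j) x) - k ^ 2 * q x * u x := by
      rw [← heq x]; unfold lap; ring
    rw [this]
    ring
  have cW : Integrable (fun x => ∑ j, pderiv' j
      (fun y => ‖y‖ ^ (2 * τ + 2) * (u y * (pderiv' j u y - F j y))) x) := by
    refine itg (continuous_finsetSum _ fun j _ => pd_cont j (hW j)) hc fun x hx => ?_
    rw [hdiv x]; simp [off0 hx, off1 _ hx]
  have : 0 ≤ ∫ x, ((k ^ 2 * (q x * ‖x‖ ^ (2 * τ + 2) * u x ^ 2)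
        + (2 * (2 * τ + 2) ^ 2 + 1/2) * (‖x‖ ^ (2 * τ + 2) * u x ^ 2)
        + (1/2) * (‖x‖ ^ (2 * τ + 4) * f x ^ 2)
        + (5/4) * ∑ j, ‖x‖ ^ (2 * τ + 2) * F j x ^ 2)
        + (∑ j, pderiv' j (fun y => ‖y‖ ^ (2 * τ + 2) * (u y * (pderiv' j u y - F j y))) x)
        - (1/2) * (‖x‖ ^ (2 * τ + 2) * gsq u x)) := by
    refine integral_nonneg fun x => ?_
    simp only [Pi.zero_apply]
    rw [hdiv x, rT, rS, ← Finset.mul_sum]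
    have b1 : (3/4) * gsq u x - ∑ j, F j x ^ 2 ≤ ∑ j, pderiv' j u x * (pderiv' j u x - F j x) := by
      unfold gsq
      rw [Finset.mul_sum, ← Finset.sum_sub_distrib]
      refine Finset.sum_le_sum fun j _ => ?_
      nlinarith [sq_nonneg (pderiv' j u x - 2 * F j x)]
    have b2 : (∑ j, x j * (pderiv' j u x - F j x)) ^ 2
        ≤ ‖x‖ ^ 2 * (2 * gsq u x + 2 * ∑ j, F j x ^ 2) := by
      refine (Finset.sum_mul_sq_le_sq_mul_sq _ _ _).trans ?_
      rw [EuclideanSpace.norm_sq_eq]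
      simp only [Real.norm_eq_abs, sq_abs]
      refine mul_le_mul_of_nonneg_left ?_ (Finset.sum_nonneg fun i _ => sq_nonneg _)
      unfold gsq
      rw [Finset.mul_sum, Finset.mul_sum, ← Finset.sum_add_distrib]
      refine Finset.sum_le_sum fun j _ => ?_
      nlinarith [sq_nonneg (pderiv' j u x + F j x)]
    have b3 : u x ^ 2 ≤ ‖x‖ ^ 2 * u x ^ 2 := by
      by_cases hx : u x = 0
      · simp [hx]
      · have := h1 x hx
        exact le_mul_of_one_le_left (sq_nonneg _) (one_le_pow₀ this)
    set y := ∑ j, x j * (pderiv' j u x - F j x)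
    set D := ∑ j, pderiv' j u x * (pderiv' j u x - F j x)
    set N := ∑ j, F j x ^ 2
    set P := gsq u x
    set a := 2 * τ + 2
    set r := ‖x‖ ^ 2
    have hr : 0 ≤ r := sq_nonneg _
    have b4 : -(2 * a ^ 2 * u x ^ 2) - y ^ 2 / 8 ≤ a * u x * y := by
      nlinarith [sq_nonneg (4 * a * u x + y)]
    have b5 : -(1/2 * u x ^ 2) - 1/2 * (r ^ 2 * f x ^ 2) ≤ r * (u x * f x) := by
      nlinarith [sq_nonneg (u x + r * f x)]
    have b6 := mul_le_mul_of_nonneg_left b1 hr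
    have b7 : (2 * a ^ 2 + 1/2) * u x ^ 2 ≤ (2 * a ^ 2 + 1/2) * (r * u x ^ 2) :=
      mul_le_mul_of_nonneg_left b3 (by positivity)
    have fin : 0 ≤ k ^ 2 * (q x * r * u x ^ 2) + (2 * a ^ 2 + 1/2) * (r * u x ^ 2)
        + 1/2 * (r ^ 2 * f x ^ 2) + 5/4 * (r * N)
        + (r * (u x * (f x - k ^ 2 * q x * u x)) + r * D + a * u x * y) - 1/2 * (r * P) := by
      linarith
    have := mul_nonneg (hS0 x) fin
    linarith
  have iN : Integrable (fun x => ∑ j, ‖x‖ ^ (2 * τ + 2) * F j x ^ 2) :=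
    integrable_finsetSum _ fun j _ => iV j
  rw [integral_sub (iadd (iadd (iadd (iadd (iQ.const_mul _) (iB.const_mul _)) (iF.const_mul _)) (iN.const_mul _)) cW) (iP.const_mul _),
    integral_add (iadd (iadd (iadd (iQ.const_mul _) (iB.const_mul _)) (iF.const_mul _)) (iN.const_mul _)) cW, z,
    integral_add (iadd (iadd (iQ.const_mul _) (iB.const_mul _)) (iF.const_mul _)) (iN.const_mul _),
    integral_add (iadd (iQ.const_mul _) (iB.const_mul _)) (iF.const_mul _),
    integral_add (iQ.const_mul _) (iB.const_mul _), integral_const_mul, integral_const_mul,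
    integral_const_mul, integral_const_mul, integral_const_mul,
    integral_finsetSum _ (fun j _ => iV j)] at this
  linarith

end Est

section Conv
variable {n : ℕ}

/-- scalar convolution -/
noncomputable def cv (k h : EuclideanSpace ℝ (Fin n) → ℝ) : EuclideanSpace ℝ (Fin n) → ℝ :=
  convolution k h (ContinuousLinearMap.mul ℝ ℝ) volume

lemma cv_apply (k h : EuclideanSpace ℝ (Fin n) → ℝ) (x) : cv k h x = ∫ t, k t * h (x - t) := by
  simp [cv, convolution_def]

lemma cv_cd {k h : EuclideanSpace ℝ (Fin n) → ℝ} {m : ℕ∞} (hk : ContDiff ℝ m k)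
    (hkc : HasCompactSupport k) (hh : Continuous h) : ContDiff ℝ m (cv k h) :=
  hkc.contDiff_convolution_left _ hk hh.locallyIntegrable

lemma cv_cont {k h : EuclideanSpace ℝ (Fin n) → ℝ} (hk : Continuous k)
    (hkc : HasCompactSupport k) (hh : Continuous h) : Continuous (cv k h) :=
  hkc.continuous_convolution_left _ hk hh.locallyIntegrable

lemma pd_cv (j : Fin n) {k h : EuclideanSpace ℝ (Fin n) → ℝ} (hk : ContDiff ℝ 1 k)
    (hkc : HasCompactSupport k) (hh : Continuous h) (x) :
    pderiv' j (cv k h) x = cv (pderiv' j k) h x := by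
  have h1 := hkc.hasFDerivAt_convolution_left (μ := volume) (ContinuousLinearMap.mul ℝ ℝ) hk
    hh.locallyIntegrable x
  unfold pderiv' cv
  rw [h1.fderiv]
  rw [convolution_def, convolution_def, ContinuousLinearMap.integral_apply]
  · simp
  · have := (hkc.fderiv ℝ).convolutionExists_left (μ := volume)
      ((ContinuousLinearMap.mul ℝ ℝ).precompL (EuclideanSpace ℝ (Fin n)))
      (hk.continuous_fderiv (by norm_num)) hh.locallyIntegrable x
    exact this

lemma cv_comm (k h : EuclideanSpace ℝ (Fin n) → ℝ) : cv k h = cv h k := by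
  unfold cv
  rw [← convolution_flip]
  congr 1
  ext; simp

lemma pd_cv_swap (j : Fin n) {k h : EuclideanSpace ℝ (Fin n) → ℝ} (hk : ContDiff ℝ 1 k)
    (hkc : HasCompactSupport k) (hh : ContDiff ℝ 1 h) (hhc : HasCompactSupport h) (x) :
    cv (pderiv' j k) h x = cv k (pderiv' j h) x := by
  rw [← pd_cv j hk hkc hh.continuous, cv_comm k h, pd_cv j hh hhc hk.continuous, cv_comm]

lemma cv_off {k h : EuclideanSpace ℝ (Fin n) → ℝ} {T : ℝ} (hk : ∀ t, T < ‖t‖ → k t = 0)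
    {x : EuclideanSpace ℝ (Fin n)} (hx : ∀ t : EuclideanSpace ℝ (Fin n), ‖t‖ ≤ T → h (x - t) = 0) :
    cv k h x = 0 := by
  rw [cv_apply]
  refine integral_eq_zero_of_ae (Filter.Eventually.of_forall fun t => ?_)
  simp only [Pi.zero_apply]
  rcases lt_or_ge T ‖t‖ with h1 | h1
  · rw [hk t h1, zero_mul]
  · rw [hx t h1, mul_zero]

lemma cv_cs {k h : EuclideanSpace ℝ (Fin n) → ℝ} (hkc : HasCompactSupport k)
    (hhc : HasCompactSupport h) : HasCompactSupport (cv k h) :=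
  hkc.convolution _ hhc

lemma young {k h W W' : EuclideanSpace ℝ (Fin n) → ℝ} {T c : ℝ} (hc : 0 ≤ c)
    (hk : Continuous k) (hkc : HasCompactSupport k) (hh : Continuous h) (hhc : HasCompactSupport h)
    (hW0 : ∀ x, 0 ≤ W x) (hW' : Continuous W') (hW0' : ∀ x, 0 ≤ W' x)
    (hkT : ∀ t, T < ‖t‖ → k t = 0)
    (hW : ∀ x t, ‖t‖ ≤ T → h (x - t) ≠ 0 → W x ≤ c * W' (x - t)) :
    ∫ x, W x * cv k h x ^ 2 ≤ c * (∫ t, |k t|) ^ 2 * ∫ x, W' x * h x ^ 2 := by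
  have ik : Integrable (fun t => |k t|) :=
    itg hk.abs hkc fun x hx => by simp [off0 hx]
  have ih : Integrable (fun x => W' x * h x ^ 2) :=
    itg (hW'.mul (hh.pow 2)) hhc fun x hx => by simp [off0 hx]
  have hA : 0 ≤ ∫ t, |k t| := integral_nonneg fun t => abs_nonneg _
  have cvi : Integrable (cv (fun t => |k t|) (fun x => W' x * h x ^ 2)) :=
    ik.integrable_convolution _ ih
  have cve : ∫ x, cv (fun t => |k t|) (fun x => W' x * h x ^ 2) x
      = (∫ t, |k t|) * ∫ x, W' x * h x ^ 2 := by
    have := integral_convolution (μ := volume) (ν := volume) (ContinuousLinearMap.mul ℝ ℝ) ik ih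
    simpa [cv] using this
  have pt : ∀ x, W x * cv k h x ^ 2
      ≤ c * (∫ t, |k t|) * cv (fun t => |k t|) (fun x => W' x * h x ^ 2) x := by
    intro x
    have hs : Continuous (fun t : EuclideanSpace ℝ (Fin n) => h (x - t)) :=
      hh.comp (continuous_const.sub continuous_id)
    have hs' : Continuous (fun t : EuclideanSpace ℝ (Fin n) => W' (x - t)) :=
      hW'.comp (continuous_const.sub continuous_id)
    have i1 : Integrable (fun t => |k t| * h (x - t) ^ 2) :=
      itg (hk.abs.mul (hs.pow 2)) hkc fun t ht => by simp [off0 ht]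
    have i2 : Integrable (fun t => k t * h (x - t)) :=
      itg (hk.mul hs) hkc fun t ht => by simp [off0 ht]
    have i3 : Integrable (fun t => |k t| * (W' (x - t) * h (x - t) ^ 2)) :=
      itg (hk.abs.mul (hs'.mul (hs.pow 2))) hkc fun t ht => by simp [off0 ht]
    have cs : cv k h x ^ 2 ≤ (∫ t, |k t|) * ∫ t, |k t| * h (x - t) ^ 2 := by
      have d : discrim (∫ t, |k t|) (-(2 * cv k h x)) (∫ t, |k t| * h (x - t) ^ 2) ≤ 0 := by
        refine discrim_le_zero fun l => ?_
        have : 0 ≤ ∫ t, ((l * l) * |k t| + (-(2 * l)) * (k t * h (x - t)) + |k t| * h (x - t) ^ 2) := by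
          refine integral_nonneg fun t => ?_
          simp only [Pi.zero_apply]
          rcases le_total 0 (k t) with h0 | h0
          · rw [abs_of_nonneg h0]
            nlinarith [mul_nonneg h0 (sq_nonneg (l - h (x - t)))]
          · rw [abs_of_nonpos h0]
            nlinarith [mul_nonneg (neg_nonneg.2 h0) (sq_nonneg (l + h (x - t)))]
        rw [integral_add (iadd (ik.const_mul _) (i2.const_mul _)) i1,
          integral_add (ik.const_mul _) (i2.const_mul _), integral_const_mul, integral_const_mul,
          ← cv_apply] at this
        linarith
      unfold discrim at d
      linarith
    have h2 : W x * ∫ t, |k t| * h (x - t) ^ 2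
        ≤ c * cv (fun t => |k t|) (fun x => W' x * h x ^ 2) x := by
      rw [cv_apply, ← integral_const_mul, ← integral_const_mul]
      refine integral_mono (i1.const_mul _) (i3.const_mul _) fun t => ?_
      simp only
      rcases lt_or_ge T ‖t‖ with h1 | h1
      · simp [hkT t h1]
      · by_cases hz : h (x - t) = 0
        · simp [hz]
        · have := mul_le_mul_of_nonneg_right (hW x t h1 hz)
            (mul_nonneg (abs_nonneg (k t)) (sq_nonneg (h (x - t))))
          linarith
    calc W x * cv k h x ^ 2 ≤ W x * ((∫ t, |k t|) * ∫ t, |k t| * h (x - t) ^ 2) :=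
          mul_le_mul_of_nonneg_left cs (hW0 x)
      _ = (∫ t, |k t|) * (W x * ∫ t, |k t| * h (x - t) ^ 2) := by ring
      _ ≤ (∫ t, |k t|) * (c * cv (fun t => |k t|) (fun x => W' x * h x ^ 2) x) :=
          mul_le_mul_of_nonneg_left h2 hA
      _ = _ := by ring
  calc ∫ x, W x * cv k h x ^ 2
      ≤ ∫ x, c * (∫ t, |k t|) * cv (fun t => |k t|) (fun x => W' x * h x ^ 2) x := by
        refine integral_mono_of_nonneg (Filter.Eventually.of_forall fun x => ?_) (cvi.const_mul _)
          (Filter.Eventually.of_forall pt)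
        exact mul_nonneg (hW0 x) (sq_nonneg _)
    _ = _ := by rw [integral_const_mul, cve]; ring

end Conv

section Kern
variable {n : ℕ}

lemma alpha_exists (n : ℕ) : ∃ α : ℝ → ℝ, ContDiff ℝ 3 α ∧
    (∀ r : ℝ, 1 ≤ r → α (r ^ 2) = (r ^ n)⁻¹) ∧
    (∀ r : ℝ, 0 < r → 0 ≤ α (r ^ 2) ∧ α (r ^ 2) ≤ (r ^ n)⁻¹) ∧
    (∀ s : ℝ, 0 ≤ s → 0 ≤ n * α s + 2 * s * deriv α s) ∧
    (∀ s : ℝ, 1 < s → n * α s + 2 * s * deriv α s = 0) ∧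
    (∃ s : ℝ, 0 < s ∧ n * α s + 2 * s * deriv α s ≠ 0) := by
  set χ : ℝ → ℝ := fun s => Real.smoothTransition (2 * s - 1) with hχ
  have hχd : ContDiff ℝ 3 χ :=
    (Real.smoothTransition.contDiff (n := 3)).comp (by fun_prop : ContDiff ℝ 3 (fun s : ℝ => 2 * s - 1))
  have hχ0 : ∀ s ≤ 1/2, χ s = 0 := fun s hs => Real.smoothTransition.zero_of_nonpos (by linarith)
  have hχ1 : ∀ s, 1 ≤ s → χ s = 1 := fun s hs => Real.smoothTransition.one_of_one_le (by linarith)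
  have hχm : Monotone χ := fun a b hab => Real.smoothTransition.monotone (by linarith)
  set α : ℝ → ℝ := fun s => χ s * s ^ (-(n:ℝ)/2) with hα
  have hr : ∀ r : ℝ, 0 < r → (r^2) ^ (-(n:ℝ)/2) = (r ^ n)⁻¹ := by
    intro r hr
    rw [← Real.rpow_natCast r 2, ← Real.rpow_mul hr.le]
    rw [show ((2:ℕ):ℝ) * (-(n:ℝ)/2) = -(n:ℝ) by push_cast; ring, Real.rpow_neg hr.le,
      Real.rpow_natCast]
  have hloc : ∀ s : ℝ, s < 1/2 → α =ᶠ[nhds s] fun _ => 0 := by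
    intro s hs
    filter_upwards [gt_mem_nhds hs] with t ht
    simp [hα, hχ0 t ht.le]
  have hderiv : ∀ s : ℝ, 0 < s → n * α s + 2 * s * deriv α s
      = 2 * s * s ^ (-(n:ℝ)/2) * deriv χ s := by
    intro s hs
    have h1 : HasDerivAt χ (deriv χ s) s :=
      ((hχd.differentiable (by norm_num)) s).hasDerivAt
    have h2 := Real.hasDerivAt_rpow_const (p := -(n:ℝ)/2) (Or.inl hs.ne')
    have h3 : deriv α s = _ := (h1.mul h2).deriv
    rw [h3, Real.rpow_sub_one hs.ne']
    simp only [hα]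
    field_simp
    ring
  have hχd0 : ∀ s, 0 ≤ deriv χ s := fun s => hχm.deriv_nonneg
  refine ⟨α, ?_, ?_, ?_, ?_, ?_, ?_⟩
  · rw [contDiff_iff_contDiffAt]
    intro s
    rcases lt_or_ge s (1/2) with h | h
    · exact contDiffAt_const.congr_of_eventuallyEq (hloc s h)
    · exact hχd.contDiffAt.mul (Real.contDiffAt_rpow_const_of_ne (by linarith))
  · intro r h
    simp only [hα]
    rw [hr r (by linarith), hχ1 _ (by nlinarith)]; simp
  · intro r h
    simp only [hα]
    rw [hr r h]
    have : 0 ≤ (r^n)⁻¹ := by positivity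
    have h1 : χ (r^2) ≤ 1 := Real.smoothTransition.le_one _
    have h0 : 0 ≤ χ (r^2) := Real.smoothTransition.nonneg _
    constructor
    · positivity
    · nlinarith
  · intro s hs
    rcases lt_or_ge s (1/2) with h | h
    · rw [(hloc s h).deriv_eq, (hloc s h).eq_of_nhds]; simp
    · rw [hderiv s (by linarith)]
      have := hχd0 s
      positivity
  · intro s hs
    rw [hderiv s (by linarith)]
    have : χ =ᶠ[nhds s] fun _ => 1 := by
      filter_upwards [lt_mem_nhds hs] with t ht using hχ1 t ht.le
    rw [this.deriv_eq]; simp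
  · obtain ⟨c, hc, hc'⟩ := exists_deriv_eq_slope χ (show (1/2:ℝ) < 1 by norm_num)
      hχd.continuous.continuousOn (hχd.differentiable (by norm_num)).differentiableOn
    refine ⟨c, by linarith [hc.1], ?_⟩
    have hc0 : 0 < c := by linarith [hc.1]
    rw [hderiv c hc0, hc', hχ1 1 le_rfl, hχ0 _ le_rfl]
    have : 0 < c ^ (-(n:ℝ)/2) := Real.rpow_pos_of_pos hc0 _
    norm_num
    exact ⟨hc0.ne', this.ne'⟩

lemma pd_rad (j : Fin n) {a : ℝ → ℝ} (ha : Differentiable ℝ a) (x : EuclideanSpace ℝ (Fin n)) :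
    pderiv' j (fun y => a (‖y‖ ^ 2)) x = 2 * x j * deriv a (‖x‖ ^ 2) := by
  have h1 : HasFDerivAt (fun y : EuclideanSpace ℝ (Fin n) => ‖y‖ ^ 2) (2 • innerSL ℝ x) x :=
    (hasStrictFDerivAt_norm_sq x).hasFDerivAt
  have h2 := (ha (‖x‖^2)).hasDerivAt.comp_hasFDerivAt x h1
  have h3 : fderiv ℝ (fun y : EuclideanSpace ℝ (Fin n) => a (‖y‖ ^ 2)) x = _ := h2.fderiv
  unfold pderiv'
  rw [h3]
  simp [innerSL_apply_apply, EuclideanSpace.inner_single_right]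
  ring

/-- radial profile divergence -/
noncomputable def bb (n : ℕ) (α : ℝ → ℝ) (x : EuclideanSpace ℝ (Fin n)) : ℝ :=
  n * α (‖x‖ ^ 2) + 2 * ‖x‖ ^ 2 * deriv α (‖x‖ ^ 2)

/-- radial vector field component -/
noncomputable def kb (α : ℝ → ℝ) (j : Fin n) (x : EuclideanSpace ℝ (Fin n)) : ℝ :=
  x j * α (‖x‖ ^ 2)

lemma rad_cd {m : ℕ∞} {a : ℝ → ℝ} (ha : ContDiff ℝ m a) :
    ContDiff ℝ m (fun y : EuclideanSpace ℝ (Fin n) => a (‖y‖ ^ 2)) :=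
  ha.comp (contDiff_norm_sq ℝ)

lemma der_cd {a : ℝ → ℝ} (ha : ContDiff ℝ 3 a) : ContDiff ℝ 2 (deriv a) := by
  have := (contDiff_succ_iff_deriv (n := 2) (f := a)).1 (by rw [show (2:WithTop ℕ∞) + 1 = 3 by norm_num]; exact ha)
  exact this.2.2

lemma kb_cd {α : ℝ → ℝ} (ha : ContDiff ℝ 3 α) (j : Fin n) : ContDiff ℝ 3 (kb α j) := by
  unfold kb
  exact ((EuclideanSpace.proj (𝕜 := ℝ) j).contDiff).mul (rad_cd (m := 3) ha)

lemma bb_cd {α : ℝ → ℝ} (ha : ContDiff ℝ 3 α) : ContDiff ℝ 2 (bb n α) := by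
  unfold bb
  exact (contDiff_const.mul (rad_cd (m := 2) (ha.of_le (by norm_num)))).add
    ((contDiff_const.mul (contDiff_norm_sq ℝ)).mul (rad_cd (m := 2) (der_cd ha)))

lemma pd_kb {α : ℝ → ℝ} (ha : ContDiff ℝ 3 α) (i j : Fin n) (x : EuclideanSpace ℝ (Fin n)) :
    pderiv' i (kb α j) x = (if j = i then α (‖x‖^2) else 0)
      + 2 * (x i * x j) * deriv α (‖x‖^2) := by
  unfold kb
  rw [pd_mul i x (dat (coord_cd j) x) (dat (rad_cd (m := 1) (ha.of_le (by norm_num))) x),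
    pd_rad i (ha.differentiable (by norm_num)), pd_coord]
  split_ifs <;> ring

lemma lap_kb {α : ℝ → ℝ} (ha : ContDiff ℝ 3 α) (j : Fin n) (x : EuclideanSpace ℝ (Fin n)) :
    lap (kb α j) x = pderiv' j (bb n α) x := by
  have h1 : bb n α = fun x => ∑ i, pderiv' i (kb α i) x := by
    ext x
    simp only [pd_kb ha, if_true, Finset.sum_add_distrib]
    rw [← Finset.sum_mul, ← Finset.mul_sum, nrm_sq]
    simp [bb]
  have hk2 : ∀ j : Fin n, ContDiff ℝ 2 (kb α j) := fun j => (kb_cd ha j).of_le (by norm_num)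
  rw [h1, pd_sum _ _ _ (fun i _ => dat (pd_cd1 i (hk2 i)) x)]
  unfold lap
  refine Finset.sum_congr rfl fun i _ => ?_
  rw [pd_symm j i (hk2 i)]
  congr 1
  ext y
  rw [pd_kb ha, pd_kb ha]
  simp only [eq_comm (a := i) (b := j)]
  rw [mul_comm (y i)]


/-- rescaled profile -/
noncomputable def al (n : ℕ) (c l : ℝ) (α : ℝ → ℝ) (s : ℝ) : ℝ :=
  (c * (l ^ n)⁻¹) * α ((l⁻¹) ^ 2 * s)

lemma al_cd {α : ℝ → ℝ} (ha : ContDiff ℝ 3 α) (c l : ℝ) : ContDiff ℝ 3 (al n c l α) := by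
  unfold al
  exact contDiff_const.mul (ha.comp (contDiff_const.mul contDiff_id))

lemma bb_al {α : ℝ → ℝ} (c l : ℝ) (x : EuclideanSpace ℝ (Fin n)) :
    bb n (al n c l α) x = (c * (l ^ n)⁻¹) * bb n α (l⁻¹ • x) := by
  have h : ∀ s, deriv (al n c l α) s = (c * (l ^ n)⁻¹) * ((l⁻¹)^2 * deriv α ((l⁻¹)^2 * s)) := by
    intro s
    have : al n c l α = fun s => (c * (l ^ n)⁻¹) * (fun t => α ((l⁻¹) ^ 2 * t)) s := rfl
    rw [this, deriv_const_mul_field]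
    congr 1
    rw [deriv_comp_mul_left]; simp
  unfold bb
  rw [h]
  have : ‖l⁻¹ • x‖^2 = (l⁻¹)^2 * ‖x‖^2 := by
    rw [norm_smul, mul_pow, Real.norm_eq_abs, sq_abs]
  rw [this]
  unfold al
  ring

lemma al_eq {α : ℝ → ℝ} (h1 : ∀ r : ℝ, 1 ≤ r → α (r ^ 2) = (r ^ n)⁻¹) (c : ℝ) {l r : ℝ} (hl : 0 < l)
    (hr : l ≤ r) : al n c l α (r ^ 2) = c * (r ^ n)⁻¹ := by
  unfold al
  rw [← mul_pow, h1]
  · rw [mul_pow, inv_pow]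
    field_simp
  · rw [inv_mul_eq_div, le_div_iff₀ hl]; linarith

lemma al_le {α : ℝ → ℝ} (h1 : ∀ r : ℝ, 0 < r → 0 ≤ α (r ^ 2) ∧ α (r ^ 2) ≤ (r ^ n)⁻¹)
    {c l r : ℝ} (hc : 0 ≤ c) (hl : 0 < l)
    (hr : 0 < r) : 0 ≤ al n c l α (r ^ 2) ∧ al n c l α (r ^ 2) ≤ c * (r ^ n)⁻¹ := by
  unfold al
  rw [← mul_pow]
  have := h1 (l⁻¹ * r) (by positivity)
  refine ⟨mul_nonneg (by positivity) this.1, ?_⟩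
  calc _ ≤ c * (l^n)⁻¹ * ((l⁻¹ * r)^n)⁻¹ := by gcongr; exact this.2
    _ = _ := by
      rw [mul_pow, inv_pow]
      field_simp

lemma cs_of {h : EuclideanSpace ℝ (Fin n) → ℝ} {T : ℝ} (hT : ∀ x, T < ‖x‖ → h x = 0) :
    HasCompactSupport h :=
  HasCompactSupport.intro (isCompact_closedBall 0 T) (fun x hx => hT x (by simpa using hx))

lemma kernel (n : ℕ) (hn : 1 ≤ n) : ∃ C : ℝ, 0 < C ∧ ∀ ε T : ℝ, 0 < ε → ε < T →
    ∃ (K : Fin n → EuclideanSpace ℝ (Fin n) → ℝ) (ρ σ : EuclideanSpace ℝ (Fin n) → ℝ),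
      (∀ j, ContDiff ℝ 2 (K j)) ∧ (∀ j x, T < ‖x‖ → K j x = 0) ∧ (∀ j, ∫ x, |K j x| ≤ C * T) ∧
      ContDiff ℝ 1 ρ ∧ ContDiff ℝ 1 σ ∧ (∀ x, ε < ‖x‖ → ρ x = 0) ∧ (∀ x, T < ‖x‖ → σ x = 0) ∧
      (∀ j x, lap (K j) x = pderiv' j ρ x - pderiv' j σ x) ∧
      (∀ x, 0 ≤ ρ x) ∧ ∫ x, ρ x = 1 ∧ (∀ j, ∫ x, |pderiv' j σ x| ≤ C / T) := by
  obtain ⟨α, ha, h1, h2, h3, h4, s0, hs0, h5⟩ := alpha_exists n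
  have hbc : Continuous (bb n α) := (bb_cd ha).continuous
  have hb0 : ∀ x : EuclideanSpace ℝ (Fin n), 1 < ‖x‖ → bb n α x = 0 := fun x hx =>
    h4 _ (by nlinarith)
  have hb1 : ∀ x, 0 ≤ bb n α x := fun x => h3 _ (by positivity)
  have hbs : HasCompactSupport (bb n α) := cs_of hb0
  set c0 := ∫ x, bb n α x with hc0
  have hc0pos : 0 < c0 := by
    refine hbc.integral_pos_of_hasCompactSupport_nonneg_nonzero hbs hb1
      (x := EuclideanSpace.single ⟨0, hn⟩ (√s0)) ?_
    unfold bb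
    have : ‖EuclideanSpace.single (⟨0, hn⟩ : Fin n) (√s0)‖ ^ 2 = s0 := by
      simp [Real.sq_sqrt hs0.le]
    rw [this]; exact h5
  set c := c0⁻¹ with hc
  have hcpos : 0 < c := by positivity
  set ω := (volume : Measure (EuclideanSpace ℝ (Fin n))).real (Metric.ball 0 1) with hω
  have hω0 : 0 ≤ ω := measureReal_nonneg
  have hcd : ∀ l, ContDiff ℝ 3 (al n c l α) := fun l => al_cd ha c l
  have hρ0 : ∀ l, 0 < l → ∀ x : EuclideanSpace ℝ (Fin n), l < ‖x‖ → bb n (al n c l α) x = 0 := by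
    intro l hl x hx
    rw [bb_al, hb0, mul_zero]
    rw [norm_smul, norm_inv, Real.norm_of_nonneg hl.le, inv_mul_eq_div, lt_div_iff₀ hl]; linarith
  refine ⟨n * ω * c + (∑ j, c * ∫ x, |pderiv' j (bb n α) x|) + 1, ?_, ?_⟩
  · have : 0 ≤ ∑ j, c * ∫ x, |pderiv' j (bb n α) x| := Finset.sum_nonneg fun j _ =>
      mul_nonneg hcpos.le (integral_nonneg fun x => abs_nonneg _)
    positivity
  intro ε T hε hεT
  have hT : 0 < T := hε.trans hεT
  have hS : ∀ j : Fin n, c * ∫ x, |pderiv' j (bb n α) x| ≤ ∑ j, c * ∫ x, |pderiv' j (bb n α) x| :=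
    fun j => Finset.single_le_sum (f := fun j => c * ∫ x, |pderiv' j (bb n α) x|)
      (fun j _ => mul_nonneg hcpos.le (integral_nonneg fun x => abs_nonneg _)) (Finset.mem_univ j)
  set A : ℝ → ℝ := fun s => al n c ε α s - al n c T α s with hA
  have hA0 : ∀ r, T ≤ r → A (r^2) = 0 := by
    intro r hr
    simp only [hA]
    rw [al_eq h1 c hε (hεT.le.trans hr), al_eq h1 c hT hr, sub_self]
  have hAc : Continuous A := (hcd ε).continuous.sub (hcd T).continuous
  have hA1 : ∀ r, 0 < r → |A (r^2)| ≤ c * (r^n)⁻¹ := by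
    intro r hr
    have e1 := al_le h2 hcpos.le hε hr
    have e2 := al_le h2 hcpos.le hT hr
    rw [abs_le]; constructor <;> simp only [hA] <;> linarith
  have hK : ∀ j : Fin n, (fun x => kb (al n c ε α) j x - kb (al n c T α) j x)
      = fun x : EuclideanSpace ℝ (Fin n) => x j * A (‖x‖^2) := by
    intro j; ext x; simp only [kb, hA]; ring
  have hk2 : ∀ l (j : Fin n), ContDiff ℝ 2 (kb (al n c l α) j) :=
    fun l j => (kb_cd (hcd l) j).of_le (by norm_num)
  have hK0 : ∀ (j : Fin n) (x : EuclideanSpace ℝ (Fin n)), T ≤ ‖x‖ →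
      kb (al n c ε α) j x - kb (al n c T α) j x = 0 := by
    intro j x hx
    have := congrFun (hK j) x
    simp only at this
    rw [this, hA0 _ hx, mul_zero]
  have hb1' : ∀ l, ContDiff ℝ 1 (bb n (al n c l α)) := fun l => (bb_cd (hcd l)).of_le (by norm_num)
  refine ⟨fun j x => kb (al n c ε α) j x - kb (al n c T α) j x, bb n (al n c ε α), bb n (al n c T α),
    fun j => (hk2 ε j).sub (hk2 T j), fun j x hx => hK0 j x hx.le, ?_, hb1' _,
    hb1' _, hρ0 ε hε, hρ0 T hT, ?_, ?_, ?_, ?_⟩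
  · intro j
    have hnn : Nontrivial (EuclideanSpace ℝ (Fin n)) := by
      have : Nonempty (Fin n) := ⟨⟨0, hn⟩⟩
      infer_instance
    have hKint : Integrable (fun x => |kb (al n c ε α) j x - kb (al n c T α) j x|) := by
      refine itg (K := Metric.closedBall 0 T) (((hk2 ε j).sub (hk2 T j)).continuous.abs)
        (isCompact_closedBall 0 T) fun x hx => ?_
      rw [hK0 j x (by simp at hx; exact hx.le), abs_zero]
    have hGint : Integrable (fun x : EuclideanSpace ℝ (Fin n) => ‖x‖ * |A (‖x‖^2)|) := by
      refine itg (K := Metric.closedBall 0 T) (by fun_prop)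
        (isCompact_closedBall 0 T) fun x hx => ?_
      rw [hA0 _ (by simp at hx; exact hx.le), abs_zero, mul_zero]
    calc ∫ x, |kb (al n c ε α) j x - kb (al n c T α) j x|
        ≤ ∫ x : EuclideanSpace ℝ (Fin n), ‖x‖ * |A (‖x‖^2)| := by
          refine integral_mono hKint hGint fun x => ?_
          have := congrFun (hK j) x
          simp only at this ⊢
          rw [this, abs_mul]
          gcongr
          exact PiLp.norm_apply_le x j
      _ = n * (ω * ∫ y in Set.Ioi (0:ℝ), y ^ (n-1) * (y * |A (y^2)|)) := by
          have := integral_fun_norm_addHaar (volume : Measure (EuclideanSpace ℝ (Fin n)))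
            (fun r => r * |A (r^2)|)
          rw [this]
          simp [hω]
      _ ≤ n * (ω * (c * T)) := by
          have : ∫ y in Set.Ioi (0:ℝ), y ^ (n-1) * (y * |A (y^2)|) ≤ c * T := by
            have e : ∫ y in Set.Ioi (0:ℝ), y ^ (n-1) * (y * |A (y^2)|)
                = ∫ y in Set.Ioc (0:ℝ) T, y ^ (n-1) * (y * |A (y^2)|) := by
              refine setIntegral_eq_of_subset_of_forall_sdiff_eq_zero measurableSet_Ioi
                (fun y hy => hy.1) ?_
              rintro y ⟨hy, hy'⟩
              have : T ≤ y := by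
                by_contra hh
                exact hy' ⟨hy, (not_le.1 hh).le⟩
              rw [hA0 y this]; simp
            rw [e]
            calc _ ≤ ∫ y in Set.Ioc (0:ℝ) T, c := by
                  refine setIntegral_mono_on ?_ ?_ measurableSet_Ioc ?_
                  · exact (Continuous.integrableOn_Icc (by fun_prop)).mono_set Set.Ioc_subset_Icc_self
                  · exact integrableOn_const (by simp) (by simp)
                  · intro y hy
                    have hy0 := hy.1
                    calc y ^ (n-1) * (y * |A (y^2)|) = y^n * |A (y^2)| := by
                          rw [← mul_assoc, ← pow_succ, Nat.sub_add_cancel hn]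
                      _ ≤ y^n * (c * (y^n)⁻¹) := by gcongr; exact hA1 y hy0
                      _ = c := by field_simp
              _ = c * T := by simp [hT.le, mul_comm]
          gcongr
      _ ≤ _ := by
          have : 0 ≤ ∑ j, c * ∫ x, |pderiv' j (bb n α) x| := Finset.sum_nonneg fun j _ =>
            mul_nonneg hcpos.le (integral_nonneg fun x => abs_nonneg _)
          have h9 := mul_nonneg this hT.le
          linarith
  · intro j x
    have e1 : ∀ i, pderiv' i (fun x => kb (al n c ε α) j x - kb (al n c T α) j x)
        = fun x => pderiv' i (kb (al n c ε α) j) x - pderiv' i (kb (al n c T α) j) x := by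
      intro i; ext y
      exact pd_sub i y (dat ((hk2 ε j).of_le (by norm_num)) y) (dat ((hk2 T j).of_le (by norm_num)) y)
    rw [← lap_kb (hcd ε), ← lap_kb (hcd T)]
    unfold lap
    rw [← Finset.sum_sub_distrib]
    refine Finset.sum_congr rfl fun i _ => ?_
    rw [e1, pd_sub i x (dat (pd_cd1 i (hk2 ε j)) x) (dat (pd_cd1 i (hk2 T j)) x)]
  · intro x
    rw [bb_al]
    exact mul_nonneg (by positivity) (hb1 _)
  · have : ∀ x, bb n (al n c ε α) x = (c * (ε ^ n)⁻¹) * bb n α (ε⁻¹ • x) := fun x => bb_al c ε x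
    simp_rw [this]
    rw [integral_const_mul, Measure.integral_comp_inv_smul_of_nonneg _ _ hε.le, ← hc0]
    simp [hc]
    field_simp
  · intro j
    have e : ∀ x, |pderiv' j (bb n (al n c T α)) x|
        = (c * (T ^ n)⁻¹) * T⁻¹ * |pderiv' j (bb n α) (T⁻¹ • x)| := by
      intro x
      have e1 : bb n (al n c T α) = fun x => (c * (T ^ n)⁻¹) * bb n α (T⁻¹ • x) := by
        ext x; exact bb_al c T x
      have hd : Differentiable ℝ (bb n α) := (bb_cd ha).differentiable (by norm_num)
      rw [e1, pd_const_mul j x _ (by fun_prop)]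
      unfold pderiv'
      rw [fderiv_comp_smul]
      simp only [FunLike.coe_smul, Pi.smul_apply, smul_eq_mul, abs_mul]
      rw [abs_of_pos hcpos, abs_of_pos (inv_pos.2 hT), abs_of_pos (by positivity : 0 < (T^n)⁻¹)]
      ring
    simp_rw [e]
    rw [integral_const_mul, Measure.integral_comp_inv_smul_of_nonneg _ (fun x => |pderiv' j (bb n α) x|) hT.le]
    simp only [finrank_euclideanSpace, Fintype.card_fin, smul_eq_mul]
    have : c * (T ^ n)⁻¹ * T⁻¹ * (T ^ n * ∫ x, |pderiv' j (bb n α) x|)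
        = (c * ∫ x, |pderiv' j (bb n α) x|) / T := by field_simp
    rw [this]
    have h7 := hS j
    have : 0 ≤ n * ω * c := by positivity
    gcongr
    linarith

end Kern

section Final
variable {n : ℕ}

lemma wtcmp {τ T p : ℝ} (hτ : 2 ≤ τ) (hT : T ≤ τ⁻¹) (hp0 : 0 ≤ p) (hp : p ≤ 4 * τ)
    {x t : EuclideanSpace ℝ (Fin n)} (ht : ‖t‖ ≤ T) (h1 : 1 ≤ ‖x - t‖) :
    ‖x‖ ^ p ≤ Real.exp 4 * ‖x - t‖ ^ p := by
  have hτ0 : 0 < τ := by linarith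
  have hti : 0 < τ⁻¹ := by positivity
  have h2 : ‖x‖ ≤ ‖x - t‖ + ‖t‖ := by
    have := norm_add_le (x - t) t
    simpa using this
  have h3 : ‖x‖ ≤ ‖x - t‖ * Real.exp (τ⁻¹) := by
    have := Real.add_one_le_exp τ⁻¹
    nlinarith
  calc ‖x‖ ^ p ≤ (‖x - t‖ * Real.exp (τ⁻¹)) ^ p := Real.rpow_le_rpow (norm_nonneg _) h3 hp0
    _ = Real.exp (τ⁻¹ * p) * ‖x - t‖ ^ p := by
        rw [Real.mul_rpow (norm_nonneg _) (Real.exp_nonneg _), ← Real.exp_mul, mul_comm]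
    _ ≤ _ := by
        gcongr
        rw [inv_mul_le_iff₀ hτ0]; linarith

lemma wtcmp2 {τ T : ℝ} (hτ : 2 ≤ τ) (hT : T ≤ τ⁻¹)
    {x t : EuclideanSpace ℝ (Fin n)} (ht : ‖t‖ ≤ T) (h1 : 1 ≤ ‖x - t‖) :
    ‖x‖ ^ (2 * τ + 2) ≤ (4 * Real.exp 4) * ‖x - t‖ ^ (2 * τ + 2) := by
  have := wtcmp (p := 2 * τ + 2) hτ hT (by linarith) (by linarith) ht h1
  have h0 : 0 ≤ Real.exp 4 * ‖x - t‖ ^ (2 * τ + 2) := by positivity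
  linarith

lemma wtcmp4 {τ T : ℝ} (hτ : 2 ≤ τ) (hT : T ≤ τ⁻¹)
    {x t : EuclideanSpace ℝ (Fin n)} (ht : ‖t‖ ≤ T) (h1 : 1 ≤ ‖x - t‖) (h2 : ‖x - t‖ ≤ 2) :
    ‖x‖ ^ (2 * τ + 4) ≤ (4 * Real.exp 4) * ‖x - t‖ ^ (2 * τ + 2) := by
  have := wtcmp (p := 2 * τ + 4) hτ hT (by linarith) (by linarith) ht h1
  have h3 : ‖x - t‖ ^ (2 * τ + 4) = ‖x - t‖ ^ (2 * τ + 2) * ‖x - t‖ ^ 2 := by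
    rw [rp (x - t) (by linarith : 0 < 2 * τ + 2)]; congr 1; ring
  have h4 : ‖x - t‖ ^ 2 ≤ 4 := by nlinarith
  have h0 : 0 ≤ Real.exp 4 * ‖x - t‖ ^ (2 * τ + 2) := by positivity
  rw [h3] at this
  nlinarith

lemma moll {g : EuclideanSpace ℝ (Fin n) → ℝ} (hg : Continuous g) (hgc : HasCompactSupport g)
    {δ : ℝ} (hδ : 0 < δ) : ∃ ε0 > 0, ∀ ε, 0 < ε → ε ≤ ε0 → ∀ ρ : EuclideanSpace ℝ (Fin n) → ℝ,
      Continuous ρ → (∀ x, 0 ≤ ρ x) → (∀ x, ε < ‖x‖ → ρ x = 0) → ∫ x, ρ x = 1 →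
      ∀ x, |g x - cv ρ g x| ≤ δ := by
  have hu := hgc.uniformContinuous_of_continuous hg
  obtain ⟨d, hd, hd'⟩ := Metric.uniformContinuous_iff.1 hu δ hδ
  refine ⟨d / 2, by positivity, ?_⟩
  intro ε hε hεd ρ hρ hρ0 hρs hρ1 x
  have hρc : HasCompactSupport ρ := cs_of hρs
  have i1 : Integrable (fun t => ρ t * g x) :=
    itg (hρ.mul continuous_const) hρc fun t ht => by simp [off0 ht]
  have i2 : Integrable (fun t => ρ t * g (x - t)) :=
    itg (by fun_prop) hρc fun t ht => by simp [off0 ht]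
  have i3 : Integrable (fun t => ρ t * δ) :=
    itg (hρ.mul continuous_const) hρc fun t ht => by simp [off0 ht]
  have e : g x - cv ρ g x = ∫ t, (ρ t * g x - ρ t * g (x - t)) := by
    rw [integral_sub i1 i2, integral_mul_const, hρ1, one_mul, cv_apply]
  rw [e, ← Real.norm_eq_abs]
  calc _ ≤ ∫ t, ρ t * δ := by
        refine norm_integral_le_of_norm_le i3 (Filter.Eventually.of_forall fun t => ?_)
        rw [← mul_sub, Real.norm_eq_abs, abs_mul, abs_of_nonneg (hρ0 t)]
        rcases lt_or_ge ε ‖t‖ with h | h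
        · simp [hρs t h]
        · refine mul_le_mul_of_nonneg_left ?_ (hρ0 t)
          have := hd' (a := x) (b := x - t) (by rw [dist_eq_norm]; simp; linarith)
          rw [Real.dist_eq] at this
          exact this.le
    _ = δ := by rw [integral_mul_const, hρ1, one_mul]

lemma ysum {k F : Fin n → EuclideanSpace ℝ (Fin n) → ℝ} {W W' : EuclideanSpace ℝ (Fin n) → ℝ}
    {T c A : ℝ} (hc : 0 ≤ c)
    (hk : ∀ j, Continuous (k j)) (hF : ∀ j, Continuous (F j)) (hFc : ∀ j, HasCompactSupport (F j))
    (hWc : Continuous W) (hW0 : ∀ x, 0 ≤ W x) (hW' : Continuous W') (hW0' : ∀ x, 0 ≤ W' x)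
    (hkT : ∀ j t, T < ‖t‖ → k j t = 0) (hA : ∀ j, ∫ t, |k j t| ≤ A)
    (hW : ∀ j x t, ‖t‖ ≤ T → F j (x - t) ≠ 0 → W x ≤ c * W' (x - t)) :
    ∫ x, W x * (∑ j, cv (k j) (F j) x) ^ 2 ≤ n * c * A ^ 2 * ∑ j, ∫ x, W' x * F j x ^ 2 := by
  have hcc : ∀ j, Continuous (cv (k j) (F j)) := fun j => cv_cont (hk j) (cs_of (hkT j)) (hF j)
  have hcs : ∀ j, HasCompactSupport (cv (k j) (F j)) := fun j => cv_cs (cs_of (hkT j)) (hFc j)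
  have ij : ∀ j, Integrable (fun x => W x * cv (k j) (F j) x ^ 2) := fun j =>
    itg (hWc.mul ((hcc j).pow 2)) (hcs j) fun x hx => by simp [off0 hx]
  calc ∫ x, W x * (∑ j, cv (k j) (F j) x) ^ 2
      ≤ ∫ x, n * ∑ j, W x * cv (k j) (F j) x ^ 2 := by
        refine integral_mono_of_nonneg (Filter.Eventually.of_forall fun x =>
          mul_nonneg (hW0 x) (sq_nonneg _)) ((integrable_finsetSum _ fun j _ => ij j).const_mul _)
          (Filter.Eventually.of_forall fun x => ?_)
        have := sq_sum_le_card_mul_sum_sq (s := Finset.univ) (f := fun j => cv (k j) (F j) x)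
        simp only [Finset.card_univ, Fintype.card_fin] at this
        simp only
        rw [← Finset.mul_sum]
        nlinarith [hW0 x, mul_le_mul_of_nonneg_left this (hW0 x)]
    _ = n * ∑ j, ∫ x, W x * cv (k j) (F j) x ^ 2 := by
        rw [integral_const_mul, integral_finsetSum _ fun j _ => ij j]
    _ ≤ n * ∑ j, c * A ^ 2 * ∫ x, W' x * F j x ^ 2 := by
        gcongr with j
        refine (young hc (hk j) (cs_of (hkT j)) (hF j) (hFc j) hW0 hW' hW0' (hkT j) (hW j)).trans ?_
        have h0 : 0 ≤ ∫ t, |k j t| := integral_nonneg fun t => abs_nonneg _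
        have h1 : 0 ≤ ∫ x, W' x * F j x ^ 2 := integral_nonneg fun x =>
          mul_nonneg (hW0' x) (sq_nonneg _)
        gcongr
        exact hA j
    _ = _ := by rw [← Finset.mul_sum]; ring

lemma lap_sub {u v : EuclideanSpace ℝ (Fin n) → ℝ} (hu : ContDiff ℝ 2 u) (hv : ContDiff ℝ 2 v) (x) :
    lap (fun y => u y - v y) x = lap u x - lap v x := by
  unfold lap
  rw [← Finset.sum_sub_distrib]
  refine Finset.sum_congr rfl fun i _ => ?_
  have e1 : pderiv' i (fun y => u y - v y) = fun y => pderiv' i u y - pderiv' i v y := by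
    ext y
    exact pd_sub i y (dat (hu.of_le (by norm_num)) y) (dat (hv.of_le (by norm_num)) y)
  rw [e1, pd_sub i x (dat (pd_cd1 i hu) x) (dat (pd_cd1 i hv) x)]

lemma lap_sum {u : Fin n → EuclideanSpace ℝ (Fin n) → ℝ} (hu : ∀ j, ContDiff ℝ 2 (u j)) (x) :
    lap (fun y => ∑ j, u j y) x = ∑ j, lap (u j) x := by
  unfold lap
  rw [Finset.sum_comm]
  refine Finset.sum_congr rfl fun i _ => ?_
  have e1 : pderiv' i (fun y => ∑ j, u j y) = fun y => ∑ j, pderiv' i (u j) y := by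
    ext y
    exact pd_sum _ i y (fun j _ => dat ((hu j).of_le (by norm_num)) y)
  rw [e1, pd_sum _ i x (fun j _ => dat (pd_cd1 i (hu j)) x)]

lemma cv_int {k h : EuclideanSpace ℝ (Fin n) → ℝ} (hk : Continuous k) (hkc : HasCompactSupport k)
    (hh : Continuous h) (x) : Integrable (fun t => k t * h (x - t)) :=
  itg (by fun_prop) hkc fun t ht => by simp [off0 ht]

lemma lap_cv {k h : EuclideanSpace ℝ (Fin n) → ℝ} (hk : ContDiff ℝ 2 k) (hkc : HasCompactSupport k)
    (hh : Continuous h) (x) : lap (cv k h) x = cv (lap k) h x := by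
  have hk1 : ContDiff ℝ 1 k := hk.of_le (by norm_num)
  have e : ∀ i, pderiv' i (cv k h) = cv (pderiv' i k) h := fun i => by
    ext y; exact pd_cv i hk1 hkc hh y
  have e2 : ∀ i, pderiv' i (pderiv' i (cv k h)) x = cv (pderiv' i (pderiv' i k)) h x := fun i => by
    rw [e, pd_cv i (pd_cd1 i hk) (pd_supp i hkc) hh]
  unfold lap
  simp_rw [e2, cv_apply]
  rw [← integral_finsetSum]
  · simp_rw [Finset.sum_mul]
  · intro i _
    exact cv_int (pd_cont i (pd_cd1 i hk)) (pd_supp i (pd_supp i hkc)) hh x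

/-- decomposition of the divergence source -/
lemma decomp (n : ℕ) (hn : 1 ≤ n) : ∃ C₀ : ℝ, 0 < C₀ ∧ ∀ (T δ : ℝ), 0 < T → 0 < δ →
    ∀ F : Fin n → EuclideanSpace ℝ (Fin n) → ℝ, (∀ j, ContDiff ℝ 1 (F j)) →
    (∀ j, HasCompactSupport (F j)) →
    ∃ (K S : Fin n → EuclideanSpace ℝ (Fin n) → ℝ) (e : EuclideanSpace ℝ (Fin n) → ℝ),
      (∀ j, ContDiff ℝ 2 (K j)) ∧ (∀ j x, T < ‖x‖ → K j x = 0) ∧ (∀ j, ∫ x, |K j x| ≤ C₀ * T) ∧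
      (∀ j, Continuous (S j)) ∧ (∀ j x, T < ‖x‖ → S j x = 0) ∧ (∀ j, ∫ x, |S j x| ≤ C₀ / T) ∧
      Continuous e ∧ (∀ x, |e x| ≤ δ) ∧ 
      (∀ x, (∀ j t, ‖t‖ ≤ T → F j (x - t) = 0) → 
        (∀ j, pderiv' j (F j) x = 0) → e x = 0) ∧
      (∀ x, ∑ j, pderiv' j (F j) x - lap (fun y => ∑ j, cv (K j) (F j) y) x
        = e x + ∑ j, cv (S j) (F j) x) := by
  obtain ⟨C₀, hC₀, H⟩ := kernel n hn
  refine ⟨C₀, hC₀, fun T δ hT hδ F hF hFc => ?_⟩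
  have hgc : Continuous (fun x => ∑ j, pderiv' j (F j) x) :=
    continuous_finsetSum _ fun j _ => pd_cont j (hF j)
  have hgs : HasCompactSupport (fun x => ∑ j, pderiv' j (F j) x) := by
    refine HasCompactSupport.intro (isCompact_iUnion fun j => hFc j) fun x hx => ?_
    refine Finset.sum_eq_zero fun j _ => off1 j ?_
    intro h
    exact hx (Set.mem_iUnion.2 ⟨j, h⟩)
  obtain ⟨ε0, hε0, hm⟩ := moll hgc hgs hδ
  obtain ⟨K, ρ, σ, k1, k2, k3, r1, s1, r2, s2, lp, r3, r4, s3⟩ :=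
    H (min ε0 (T/2)) T (by positivity) ((min_le_right _ _).trans_lt (by linarith))
  have hρc := cs_of r2
  have hσc := cs_of s2
  have ex : ∀ x, cv ρ (fun x => ∑ j, pderiv' j (F j) x) x = ∑ j, cv (pderiv' j ρ) (F j) x := by
    intro x
    simp_rw [pd_cv_swap _ r1 hρc (hF _) (hFc _), cv_apply]
    rw [← integral_finsetSum]
    · simp_rw [Finset.mul_sum]
    · intro j _
      exact cv_int r1.continuous hρc (pd_cont j (hF j)) x
  refine ⟨K, fun j => pderiv' j σ,
    fun x => (∑ j, pderiv' j (F j) x) - cv ρ (fun x => ∑ j, pderiv' j (F j) x) x,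
    k1, k2, k3, fun j => pd_cont j s1, ?_, s3, hgc.sub (cv_cont r1.continuous hρc hgc), ?_, ?_, ?_⟩
  · intro j x hx
    have : σ =ᶠ[nhds x] fun _ => 0 := by
      filter_upwards [(isOpen_lt continuous_const continuous_norm).mem_nhds hx] with y hy
        using s2 y hy
    show pderiv' j σ x = 0
    unfold pderiv'
    rw [this.fderiv_eq]; simp
  · intro x
    exact hm _ (by positivity) (min_le_left _ _) ρ r1.continuous r3 r2 r4 x
  · intro x hx hx'
    have hz : ∀ j, cv (pderiv' j ρ) (F j) x = 0 := by
      intro j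
      refine cv_off (T := T) ?_ (hx j)
      intro t ht
      have : ρ =ᶠ[nhds t] fun _ => 0 := by
        filter_upwards [(isOpen_lt continuous_const continuous_norm).mem_nhds ht] with y hy
          using r2 y (lt_of_le_of_lt ((min_le_right _ _).trans (by linarith)) hy)
      unfold pderiv'
      rw [this.fderiv_eq]; simp
    simp only
    rw [ex]
    simp [hx', hz]
  · intro x
    rw [lap_sum (fun j => cv_cd (m := 2) (k1 j) (cs_of (k2 j)) (hF j).continuous)]
    simp only [ex]
    have : ∀ j, lap (cv (K j) (F j)) x = cv (pderiv' j ρ) (F j) x - cv (pderiv' j σ) (F j) x := by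
      intro j
      rw [lap_cv (k1 j) (cs_of (k2 j)) (hF j).continuous]
      simp_rw [cv_apply]
      rw [← integral_sub (cv_int (pd_cont j r1) (pd_supp j hρc) (hF j).continuous x)
        (cv_int (pd_cont j s1) (pd_supp j hσc) (hF j).continuous x)]
      simp_rw [lp, sub_mul]
    simp_rw [this, Finset.sum_sub_distrib]
    ring

end Final

section Fin2
variable {n : ℕ}

lemma four_sq (a b c d : ℝ) : (a + b + c - d) ^ 2 ≤ 4 * (a ^ 2 + b ^ 2 + c ^ 2 + d ^ 2) := by
  nlinarith [sq_nonneg (a - b), sq_nonneg (a - c), sq_nonneg (a + d), sq_nonneg (b - c),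
    sq_nonneg (b + d), sq_nonneg (c + d)]

lemma two_sq (a b : ℝ) : a ^ 2 ≤ 2 * b ^ 2 + 2 * (a - b) ^ 2 := by
  nlinarith [sq_nonneg (a - 2 * b)]

set_option maxHeartbeats 4000000 in
lemma key_L2 (n : ℕ) (hn : 1 ≤ n) (κ : ℝ) (hκ : 1 < κ) : ∃ C > (0 : ℝ), ∀ k : ℝ, 1 ≤ k →
    ∀ q : EuclideanSpace ℝ (Fin n) → ℝ, ContDiff ℝ 1 q → (∀ x, 0 ≤ q x ∧ q x ≤ κ) →
    (∀ x, 0 ≤ eul q x) → ∀ τ : ℝ, 2 ≤ τ →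
    ∀ (u f : EuclideanSpace ℝ (Fin n) → ℝ) (F : Fin n → EuclideanSpace ℝ (Fin n) → ℝ),
    ContDiff ℝ 2 u → HasCompactSupport u → (∀ x, u x ≠ 0 → ‖x‖ ≤ 2) →
    (∀ j, ContDiff ℝ 1 (F j)) → (∀ j, HasCompactSupport (F j)) →
    (∀ j, ∀ x ∈ tsupport (F j), 1 ≤ ‖x‖ ∧ ‖x‖ ≤ 2) →
    Continuous f → HasCompactSupport f →
    (∀ x, lap u x + k ^ 2 * q x * u x = f x + ∑ j : Fin n, pderiv' j (F j) x) →
    τ ^ 2 * ∫ x, ‖x‖ ^ (2 * τ + 2) * u x ^ 2 ≤ C * ((∫ x, ‖x‖ ^ (2 * τ + 4) * f x ^ 2) +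
      (max τ k) ^ 2 * ∑ j, ∫ x, ‖x‖ ^ (2 * τ + 2) * F j x ^ 2) ∧
    τ * k ^ 2 * ∫ x, q x * ‖x‖ ^ (2 * τ + 2) * u x ^ 2 ≤
      C * ((∫ x, ‖x‖ ^ (2 * τ + 4) * f x ^ 2) +
      (max τ k) ^ 2 * ∑ j, ∫ x, ‖x‖ ^ (2 * τ + 2) * F j x ^ 2) := by
  obtain ⟨C₀, hC₀, D⟩ := decomp n hn
  set B : ℝ := n * (4 * Real.exp 4) * C₀ ^ 2 with hB
  have hB0 : 0 ≤ B := by positivity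
  refine ⟨24 + 26 * (1 + κ ^ 2) * B, by positivity, ?_⟩
  intro k hk q hq hqb hqe τ hτ u f F hu huc hu2 hF hFc hFs hf hfc heq
  set m := max τ k with hm
  have hmτ : τ ≤ m := le_max_left _ _
  have hmk : k ≤ m := le_max_right _ _
  have hm0 : 0 < m := by linarith
  set T := m⁻¹ with hT
  have hT0 : 0 < T := by positivity
  have hTτ : T ≤ τ⁻¹ := by
    rw [hT]; gcongr
  have hT1 : T ≤ 1 := by
    rw [hT]; exact inv_le_one_of_one_le₀ (by linarith)
  have hTm : T * m = 1 := inv_mul_cancel₀ hm0.ne'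
  have hTk : T * k ≤ 1 := (mul_le_mul_of_nonneg_left hmk hT0.le).trans hTm.le
  have hTt : T * τ ≤ 1 := (mul_le_mul_of_nonneg_left hmτ hT0.le).trans hTm.le
  set Nf := ∫ x, ‖x‖ ^ (2 * τ + 4) * f x ^ 2 with hNf
  set Φ := ∑ j, ∫ x, ‖x‖ ^ (2 * τ + 2) * F j x ^ 2 with hΦ
  have hΦ0 : 0 ≤ Φ := Finset.sum_nonneg fun j _ => integral_nonneg fun x => by positivity
  have hNf0 : 0 ≤ Nf := integral_nonneg fun x => by positivity
  have hFz : ∀ j x, 2 < ‖x‖ → F j x = 0 := by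
    intro j x hx
    by_contra h
    have := (hFs j x (subset_tsupport _ h)).2
    linarith
  have cR : Continuous (fun x : EuclideanSpace ℝ (Fin n) => ‖x‖ ^ (2 * τ + 2)) :=
    wt_cont (by linarith)
  have cS : Continuous (fun x : EuclideanSpace ℝ (Fin n) => ‖x‖ ^ (2 * τ + 4)) :=
    wt_cont (by linarith)
  have main : ∀ δ' : ℝ, 0 < δ' →
      τ ^ 2 * ∫ x, ‖x‖ ^ (2 * τ + 2) * u x ^ 2
        ≤ (24 + 26 * (1 + κ ^ 2) * B) * (Nf + m ^ 2 * Φ) + 24 * δ' ∧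
      τ * k ^ 2 * ∫ x, q x * ‖x‖ ^ (2 * τ + 2) * u x ^ 2
        ≤ (24 + 26 * (1 + κ ^ 2) * B) * (Nf + m ^ 2 * Φ) + 24 * δ' := by
    intro δ' hδ'
    set V := (volume : Measure (EuclideanSpace ℝ (Fin n))).real (Metric.closedBall 0 3) with hV
    have hV0 : 0 ≤ V := measureReal_nonneg
    set P : ℝ := 3 ^ (2 * τ + 4) with hP
    have hP0 : 0 < P := by positivity
    set δ := √(δ' / (P * V + 1)) with hδdef
    have hδ : 0 < δ := Real.sqrt_pos.2 (by positivity)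
    have hδ2 : δ ^ 2 * (P * V + 1) = δ' := by
      rw [hδdef, Real.sq_sqrt (by positivity)]; field_simp
    obtain ⟨K, S, e, k1, k2, k3, s1, s2, s3, e1, e2, e3, e4⟩ := D T δ hT0 hδ F hF hFc
    set u₁ : EuclideanSpace ℝ (Fin n) → ℝ := fun y => ∑ j, cv (K j) (F j) y with hu₁
    set w : EuclideanSpace ℝ (Fin n) → ℝ := fun y => ∑ j, cv (S j) (F j) y with hw
    have hzero : ∀ x : EuclideanSpace ℝ (Fin n), 3 < ‖x‖ → ∀ j t, ‖t‖ ≤ T → F j (x - t) = 0 := by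
      intro x hx j t ht
      apply hFz
      have := norm_sub_norm_le x t
      linarith
    have u₁d : ContDiff ℝ 2 u₁ :=
      ContDiff.sum fun j _ => cv_cd (m := 2) (k1 j) (cs_of (k2 j)) (hF j).continuous
    have u₁0 : ∀ x, 3 < ‖x‖ → u₁ x = 0 := fun x hx =>
      Finset.sum_eq_zero fun j _ => cv_off (k2 j) (hzero x hx j)
    have wc : Continuous w := continuous_finsetSum _ fun j _ =>
      cv_cont (s1 j) (cs_of (s2 j)) (hF j).continuous
    have w0 : ∀ x, 3 < ‖x‖ → w x = 0 := fun x hx =>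
      Finset.sum_eq_zero fun j _ => cv_off (s2 j) (hzero x hx j)
    have e0 : ∀ x, 3 < ‖x‖ → e x = 0 := by
      intro x hx
      refine e3 x (hzero x hx) fun j => off1 j fun h => ?_
      have := (hFs j x h).2
      linarith
    set u₂ : EuclideanSpace ℝ (Fin n) → ℝ := fun y => u y - u₁ y with hu₂
    have u₂d : ContDiff ℝ 2 u₂ := hu.sub u₁d
    have u₂0 : ∀ x, 3 < ‖x‖ → u₂ x = 0 := by
      intro x hx
      simp only [hu₂]
      rw [u₁0 x hx, sub_zero]
      by_contra h
      have := hu2 x h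
      linarith
    have CL := carl_L2 hτ k u₂d (cs_of u₂0) (fun x hx => by
      by_contra h
      exact hx (u₂0 x (not_le.1 h))) hq (fun x => (hqb x).1) hqe
    set Ih := ∫ x, ‖x‖ ^ (2 * τ + 4) * (lap u₂ x + k ^ 2 * q x * u₂ x) ^ 2 with hIh
    have heq2 : ∀ x, lap u₂ x + k ^ 2 * q x * u₂ x = f x + e x + w x - k ^ 2 * q x * u₁ x := by
      intro x
      have h1 := heq x
      have h2 := e4 x
      have h3 := lap_sub hu u₁d x
      simp only [hu₂, hw]
      rw [h3]
      simp only [hu₁] at *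
      linarith
    -- bounds
    have hWa : ∀ j (x t : EuclideanSpace ℝ (Fin n)), ‖t‖ ≤ T → F j (x - t) ≠ 0 →
        ‖x‖ ^ (2 * τ + 4) ≤ (4 * Real.exp 4) * ‖x - t‖ ^ (2 * τ + 2) := by
      intro j x t ht h
      have := hFs j _ (subset_tsupport _ h)
      exact wtcmp4 hτ hTτ ht this.1 this.2
    have hWb : ∀ j (x t : EuclideanSpace ℝ (Fin n)), ‖t‖ ≤ T → F j (x - t) ≠ 0 →
        ‖x‖ ^ (2 * τ + 2) ≤ (4 * Real.exp 4) * ‖x - t‖ ^ (2 * τ + 2) := by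
      intro j x t ht h
      have := hFs j _ (subset_tsupport _ h)
      exact wtcmp2 hτ hTτ ht this.1
    have hNw : ∫ x, ‖x‖ ^ (2 * τ + 4) * w x ^ 2 ≤ B * m ^ 2 * Φ := by
      have := ysum (W := fun x => ‖x‖ ^ (2 * τ + 4)) (W' := fun x => ‖x‖ ^ (2 * τ + 2))
        (c := 4 * Real.exp 4) (A := C₀ / T) (by positivity) s1 (fun j => (hF j).continuous) hFc cS
        (fun x => by positivity) cR (fun x => by positivity) s2 s3 hWa
      refine this.trans (le_of_eq ?_)
      rw [hB, hT, div_inv_eq_mul]; ring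
    have hN4 : ∫ x, ‖x‖ ^ (2 * τ + 4) * u₁ x ^ 2 ≤ B * T ^ 2 * Φ := by
      have := ysum (W := fun x => ‖x‖ ^ (2 * τ + 4)) (W' := fun x => ‖x‖ ^ (2 * τ + 2))
        (c := 4 * Real.exp 4) (A := C₀ * T) (by positivity) (fun j => (k1 j).continuous)
        (fun j => (hF j).continuous) hFc cS
        (fun x => by positivity) cR (fun x => by positivity) k2 k3 hWa
      refine this.trans (le_of_eq ?_)
      rw [hB]; ring
    have hN2 : ∫ x, ‖x‖ ^ (2 * τ + 2) * u₁ x ^ 2 ≤ B * T ^ 2 * Φ := by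
      have := ysum (W := fun x => ‖x‖ ^ (2 * τ + 2)) (W' := fun x => ‖x‖ ^ (2 * τ + 2))
        (c := 4 * Real.exp 4) (A := C₀ * T) (by positivity) (fun j => (k1 j).continuous)
        (fun j => (hF j).continuous) hFc cR
        (fun x => by positivity) cR (fun x => by positivity) k2 k3 hWb
      refine this.trans (le_of_eq ?_)
      rw [hB]; ring
    have hNe : ∫ x, ‖x‖ ^ (2 * τ + 4) * e x ^ 2 ≤ δ' := by
      have h1 : ∫ x, ‖x‖ ^ (2 * τ + 4) * e x ^ 2
          = ∫ x in Metric.closedBall 0 3, ‖x‖ ^ (2 * τ + 4) * e x ^ 2 := by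
        symm
        refine setIntegral_eq_integral_of_forall_compl_eq_zero fun x hx => ?_
        rw [e0 x (by simpa using hx)]; simp
      rw [h1]
      calc _ ≤ ∫ x in Metric.closedBall (0 : EuclideanSpace ℝ (Fin n)) 3, P * δ ^ 2 := by
            refine setIntegral_mono_on ?_ ?_ measurableSet_closedBall ?_
            · exact (cS.mul (e1.pow 2)).continuousOn.integrableOn_compact (isCompact_closedBall 0 3)
            · exact integrableOn_const (isCompact_closedBall _ _).measure_lt_top.ne enorm_ne_top
            · intro x hx
              have hx3 : ‖x‖ ≤ 3 := by simpa using hx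
              have h2 : e x ^ 2 ≤ δ ^ 2 := by
                rw [← sq_abs]; exact pow_le_pow_left₀ (abs_nonneg _) (e2 x) 2
              have h3 : ‖x‖ ^ (2 * τ + 4) ≤ P :=
                Real.rpow_le_rpow (norm_nonneg _) hx3 (by linarith)
              gcongr
        _ = V * (P * δ ^ 2) := by rw [setIntegral_const, smul_eq_mul]
        _ ≤ δ' := by rw [← hδ2]; linarith [sq_nonneg δ]
    have cI : ∀ {g : EuclideanSpace ℝ (Fin n) → ℝ} {p : ℝ}, 0 ≤ p → Continuous g →
        (∀ x, 3 < ‖x‖ → g x = 0) → Integrable (fun x => ‖x‖ ^ p * g x ^ 2) := by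
      intro g p hp hg h0
      refine itg ((wt_cont hp).mul (hg.pow 2)) (isCompact_closedBall 0 3) fun x hx => ?_
      rw [h0 x (by simpa using hx)]; simp
    have iE := cI (p := 2 * τ + 4) (by linarith) e1 e0
    have iW := cI (p := 2 * τ + 4) (by linarith) wc w0
    have iU := cI (p := 2 * τ + 4) (by linarith) u₁d.continuous u₁0
    have iU' := cI (p := 2 * τ + 2) (by linarith) u₁d.continuous u₁0
    have iU2 := cI (p := 2 * τ + 2) (by linarith) u₂d.continuous u₂0
    have iF : Integrable (fun x => ‖x‖ ^ (2 * τ + 4) * f x ^ 2) :=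
      itg (cS.mul (hf.pow 2)) hfc fun x hx => by simp [off0 hx]
    have hIh_le : Ih ≤ 4 * Nf + 4 * δ' + 4 * (B * m ^ 2 * Φ)
        + 4 * (κ ^ 2 * k ^ 4) * (B * T ^ 2 * Φ) := by
      have h1 : Ih ≤ ∫ x, (4 * (‖x‖ ^ (2 * τ + 4) * f x ^ 2) + 4 * (‖x‖ ^ (2 * τ + 4) * e x ^ 2)
          + 4 * (‖x‖ ^ (2 * τ + 4) * w x ^ 2)
          + 4 * (κ ^ 2 * k ^ 4) * (‖x‖ ^ (2 * τ + 4) * u₁ x ^ 2)) := by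
        refine integral_mono_of_nonneg (Filter.Eventually.of_forall fun x => by positivity)
          (iadd (iadd (iadd (iF.const_mul 4) (iE.const_mul 4)) (iW.const_mul 4)) (iU.const_mul _))
          (Filter.Eventually.of_forall fun x => ?_)
        simp only
        rw [heq2]
        have hr : 0 ≤ ‖x‖ ^ (2 * τ + 4) := by positivity
        have hq2 : q x ^ 2 ≤ κ ^ 2 := pow_le_pow_left₀ (hqb x).1 (hqb x).2 2
        have h5 : (k ^ 2 * q x * u₁ x) ^ 2 ≤ κ ^ 2 * k ^ 4 * u₁ x ^ 2 := by
          have : (k ^ 2 * q x * u₁ x) ^ 2 = q x ^ 2 * (k ^ 4 * u₁ x ^ 2) := by ring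
          rw [this, mul_assoc]
          gcongr
        have h7 := four_sq (f x) (e x) (w x) (k ^ 2 * q x * u₁ x)
        have h8 : (f x + e x + w x - k ^ 2 * q x * u₁ x) ^ 2
            ≤ 4 * (f x ^ 2 + e x ^ 2 + w x ^ 2 + κ ^ 2 * k ^ 4 * u₁ x ^ 2) := by linarith
        have h9 := mul_le_mul_of_nonneg_left h8 hr
        linarith
      rw [integral_add (iadd (iadd (iF.const_mul 4) (iE.const_mul 4)) (iW.const_mul 4))
        (iU.const_mul _), integral_add (iadd (iF.const_mul 4) (iE.const_mul 4)) (iW.const_mul 4),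
        integral_add (iF.const_mul 4) (iE.const_mul 4), integral_const_mul, integral_const_mul,
        integral_const_mul, integral_const_mul] at h1
      have h2 : 4 * (κ ^ 2 * k ^ 4) * ∫ x, ‖x‖ ^ (2 * τ + 4) * u₁ x ^ 2
          ≤ 4 * (κ ^ 2 * k ^ 4) * (B * T ^ 2 * Φ) := by gcongr
      linarith
    have hBΦ : 0 ≤ B * Φ := by positivity
    have hm1 : 1 ≤ m := by linarith
    have hm2 : m ≤ m ^ 2 := le_self_pow₀ hm1 two_ne_zero
    have hkT : k ^ 4 * T ^ 2 ≤ m ^ 2 := by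
      have h1 : (T * k) ^ 2 ≤ 1 := pow_le_one₀ (by positivity) hTk
      have h2 : k ^ 2 ≤ m ^ 2 := by gcongr
      calc k ^ 4 * T ^ 2 = k ^ 2 * (T * k) ^ 2 := by ring
        _ ≤ k ^ 2 * 1 := by gcongr
        _ ≤ _ := by linarith
    have hIh2 : Ih ≤ 4 * Nf + 4 * δ' + 4 * (1 + κ ^ 2) * (m ^ 2 * (B * Φ)) := by
      have : 4 * (κ ^ 2 * k ^ 4) * (B * T ^ 2 * Φ) ≤ 4 * κ ^ 2 * (m ^ 2 * (B * Φ)) := by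
        calc 4 * (κ ^ 2 * k ^ 4) * (B * T ^ 2 * Φ) = 4 * κ ^ 2 * ((k ^ 4 * T ^ 2) * (B * Φ)) := by ring
          _ ≤ _ := by gcongr
      linarith
    have hX0 : 0 ≤ m ^ 2 * (B * Φ) := by positivity
    have hXN : (24 + 26 * (1 + κ ^ 2) * B) * (Nf + m ^ 2 * Φ) 
        = 24 * Nf + 24 * (m ^ 2 * Φ) + 26 * (1 + κ ^ 2) * B * Nf
          + 26 * (1 + κ ^ 2) * (m ^ 2 * (B * Φ)) := by ring
    have hY0 : 0 ≤ 24 * (m ^ 2 * Φ) := by positivity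
    have hZ0 : 0 ≤ 26 * (1 + κ ^ 2) * B * Nf := by positivity
    have hκX : 0 ≤ κ ^ 2 * (m ^ 2 * (B * Φ)) := by positivity
    have husq : ∀ x, u x ^ 2 ≤ 2 * u₁ x ^ 2 + 2 * u₂ x ^ 2 := by
      intro x
      simp only [hu₂]
      exact two_sq _ _
    rw [hXN]
    constructor
    · have h1 : ∫ x, ‖x‖ ^ (2 * τ + 2) * u x ^ 2 ≤ 2 * (∫ x, ‖x‖ ^ (2 * τ + 2) * u₁ x ^ 2)
          + 2 * ∫ x, ‖x‖ ^ (2 * τ + 2) * u₂ x ^ 2 := by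
        rw [← integral_const_mul, ← integral_const_mul, ← integral_add (iU'.const_mul 2)
          (iU2.const_mul 2)]
        refine integral_mono_of_nonneg (Filter.Eventually.of_forall fun x => by positivity)
          ((iU'.const_mul 2).add (iU2.const_mul 2)) (Filter.Eventually.of_forall fun x => ?_)
        have hr : 0 ≤ ‖x‖ ^ (2 * τ + 2) := by positivity
        have := mul_le_mul_of_nonneg_left (husq x) hr
        simp only
        linarith
      have h2 : τ ^ 2 * ∫ x, ‖x‖ ^ (2 * τ + 2) * u₁ x ^ 2 ≤ m ^ 2 * (B * Φ) := by
        calc _ ≤ τ ^ 2 * (B * T ^ 2 * Φ) := by gcongr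
          _ = (T * τ) ^ 2 * (B * Φ) := by ring
          _ ≤ m ^ 2 * (B * Φ) := by
            have h5 : (T * τ) ^ 2 ≤ 1 := pow_le_one₀ (by positivity) hTt
            have h6 : 1 ≤ m ^ 2 := by linarith
            gcongr
            linarith
      have h3 := mul_le_mul_of_nonneg_left h1 (sq_nonneg τ)
      have h4 := CL.1
      linarith
    · have iUq : Integrable (fun x => q x * ‖x‖ ^ (2 * τ + 2) * u₂ x ^ 2) :=
        itg ((hq.continuous.mul cR).mul (u₂d.continuous.pow 2)) (isCompact_closedBall 0 3)
          fun x hx => by rw [u₂0 x (by simpa using hx)]; simp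
      have h1 : ∫ x, q x * ‖x‖ ^ (2 * τ + 2) * u x ^ 2
          ≤ 2 * κ * (∫ x, ‖x‖ ^ (2 * τ + 2) * u₁ x ^ 2)
          + 2 * ∫ x, q x * ‖x‖ ^ (2 * τ + 2) * u₂ x ^ 2 := by
        rw [← integral_const_mul, ← integral_const_mul, ← integral_add (iU'.const_mul _)
          (iUq.const_mul 2)]
        refine integral_mono_of_nonneg (Filter.Eventually.of_forall fun x => ?_)
          ((iU'.const_mul _).add (iUq.const_mul 2)) (Filter.Eventually.of_forall fun x => ?_)
        · have := (hqb x).1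
          simp only [Pi.zero_apply]
          positivity
        have hq0 := (hqb x).1
        have hr : 0 ≤ ‖x‖ ^ (2 * τ + 2) := by positivity
        have h5 := mul_le_mul_of_nonneg_left (husq x) (mul_nonneg hq0 hr)
        have h6 : q x * (‖x‖ ^ (2 * τ + 2) * u₁ x ^ 2) ≤ κ * (‖x‖ ^ (2 * τ + 2) * u₁ x ^ 2) :=
          mul_le_mul_of_nonneg_right (hqb x).2 (by positivity)
        simp only
        linarith
      have h2 : τ * k ^ 2 * ∫ x, ‖x‖ ^ (2 * τ + 2) * u₁ x ^ 2 ≤ m ^ 2 * (B * Φ) := by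
        calc _ ≤ τ * k ^ 2 * (B * T ^ 2 * Φ) := by gcongr
          _ = τ * (T * k) ^ 2 * (B * Φ) := by ring
          _ ≤ m ^ 2 * (B * Φ) := by
            have h5 : (T * k) ^ 2 ≤ 1 := pow_le_one₀ (by positivity) hTk
            have h6 : τ * (T * k) ^ 2 ≤ m ^ 2 :=
              (mul_le_of_le_one_right (by linarith) h5).trans (hmτ.trans hm2)
            gcongr
      have h3 := mul_le_mul_of_nonneg_left h1 (by positivity : 0 ≤ τ * k ^ 2)
      have h4 := CL.2
      have h7 := mul_le_mul_of_nonneg_left h2 (by linarith : 0 ≤ κ)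
      have h8 : κ * (m ^ 2 * (B * Φ)) ≤ (1 + κ ^ 2) * (m ^ 2 * (B * Φ)) := by
        gcongr
        linarith [sq_nonneg (κ - 1)]
      linarith
  constructor
  · refine le_of_forall_pos_le_add fun d hd => ?_
    have := (main (d / 24) (by positivity)).1
    linarith
  · refine le_of_forall_pos_le_add fun d hd => ?_
    have := (main (d / 24) (by positivity)).2
    linarith

end Fin2

/-- Carleman estimate with weight `φ(x) = τ log |x|` for the acoustic Helmholtz operator
(Proposition 5.1). -/
theorem carleman_estimate_acoustic (n : ℕ) (hn : 2 ≤ n) (κ : ℝ) (hκ : 1 < κ) :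
    ∃ τ₀ > (0 : ℝ), ∃ C > (0 : ℝ),
      ∀ k : ℝ, 1 ≤ k →
      ∀ q : EuclideanSpace ℝ (Fin n) → ℝ,
        ContDiff ℝ 1 q →
        (∀ x, κ⁻¹ ≤ q x ∧ q x ≤ κ) →
        (∀ x, 0 ≤ ⟪gradient q x, x⟫_ℝ) →
      ∀ τ : ℝ, τ₀ ≤ τ →
      ∀ (u f : EuclideanSpace ℝ (Fin n) → ℝ)
        (F : Fin n → EuclideanSpace ℝ (Fin n) → ℝ),
        ContDiff ℝ 2 u → HasCompactSupport u →
        tsupport u ⊆ Metric.ball 0 2 \ closure (Metric.ball 0 1) →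
        (∀ j, ContDiff ℝ 1 (F j) ∧ HasCompactSupport (F j) ∧
          tsupport (F j) ⊆ Metric.ball 0 2 \ closure (Metric.ball 0 1)) →
        Continuous f →
        tsupport f ⊆ Metric.ball 0 2 \ closure (Metric.ball 0 1) →
        (∀ x, lap u x + k ^ 2 * q x * u x = f x + ∑ j : Fin n, pderiv' j (F j) x) →
        τ * (∫ x, ‖x‖ ^ (2 * τ) * (u x) ^ 2) ^ ((1 : ℝ) / 2)
            + (∫ x, ‖x‖ ^ (2 * τ + 2) * ‖gradient u x‖ ^ 2) ^ ((1 : ℝ) / 2)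
            + τ ^ ((1 : ℝ) / 2) * k *
              (∫ x, q x * ‖x‖ ^ (2 * τ + 2) * (u x) ^ 2) ^ ((1 : ℝ) / 2)
          ≤ C * ((∫ x, ‖x‖ ^ (2 * τ + 4) * (f x) ^ 2) ^ ((1 : ℝ) / 2)
              + max τ k *
                ∑ j : Fin n, (∫ x, ‖x‖ ^ (2 * τ + 2) * (F j x) ^ 2) ^ ((1 : ℝ) / 2)) := by
  obtain ⟨C₁, hC₁, H⟩ := key_L2 n (by omega) κ hκ
  refine ⟨2, by norm_num, 3 * √(40 * C₁ + 4), by positivity, ?_⟩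
  intro k hk q hq hqb hqe τ hτ u f F hu huc hus hF hf hfs heq
  simp only [← Real.sqrt_eq_rpow]
  have hball : ∀ x : EuclideanSpace ℝ (Fin n),
      x ∈ Metric.ball (0 : EuclideanSpace ℝ (Fin n)) 2 \ closure (Metric.ball 0 1) →
      1 ≤ ‖x‖ ∧ ‖x‖ ≤ 2 := by
    rintro x ⟨h1, h2⟩
    refine ⟨?_, ?_⟩
    · by_contra h
      exact h2 (subset_closure (by simpa using not_le.1 h))
    · have : ‖x‖ < 2 := by simpa using h1
      exact this.le
  have hκ0 : 0 < κ⁻¹ := by positivity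
  have hq0 : ∀ x, 0 ≤ q x := fun x => hκ0.le.trans (hqb x).1
  have hfc : HasCompactSupport f :=
    cs_of (T := 2) fun x hx => off0 fun h => by
      have := (hball x (hfs h)).2
      linarith
  have hu1 : ∀ x, u x ≠ 0 → 1 ≤ ‖x‖ ∧ ‖x‖ ≤ 2 := fun x hx => hball x (hus (subset_tsupport _ hx))
  have K2 := H k hk q hq (fun x => ⟨hq0 x, (hqb x).2⟩)
    (fun x => by have := hqe x; rwa [grad_inner] at this) τ hτ u f F hu huc (fun x hx => (hu1 x hx).2)
    (fun j => (hF j).1) (fun j => (hF j).2.1) (fun j x hx => hball x ((hF j).2.2 hx)) hf hfc heq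
  have KG := grad_est hτ k hu huc (fun x hx => (hu1 x hx).1) hq (fun j => (hF j).1)
    (fun j => (hF j).2.1) hf hfc heq
  have hG : ∫ x, ‖x‖ ^ (2 * τ + 2) * ‖gradient u x‖ ^ 2 = ∫ x, ‖x‖ ^ (2 * τ + 2) * gsq u x := by
    congr 1; ext x
    rw [grad_norm]; simp only [gsq, sq]
  rw [hG]
  have hU : ∫ x, ‖x‖ ^ (2 * τ) * u x ^ 2 ≤ ∫ x, ‖x‖ ^ (2 * τ + 2) * u x ^ 2 := by
    refine integral_mono_of_nonneg (Filter.Eventually.of_forall fun x => by positivity)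
      (itg ((wt_cont (by linarith)).mul (hu.continuous.pow 2)) huc fun x hx => by simp [off0 hx])
      (Filter.Eventually.of_forall fun x => ?_)
    by_cases h : u x = 0
    · simp [h]
    · have := Real.rpow_le_rpow_of_exponent_le (hu1 x h).1 (by linarith : 2 * τ ≤ 2 * τ + 2)
      simp only
      gcongr
  have hP0 : ∀ j, 0 ≤ ∫ x, ‖x‖ ^ (2 * τ + 2) * F j x ^ 2 := fun j =>
    integral_nonneg fun x => by positivity
  have hN0 : 0 ≤ ∫ x, ‖x‖ ^ (2 * τ + 4) * f x ^ 2 := integral_nonneg fun x => by positivity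
  have hQ0 : 0 ≤ ∫ x, q x * ‖x‖ ^ (2 * τ + 2) * u x ^ 2 := integral_nonneg fun x => by
    have := hq0 x
    simp only [Pi.zero_apply]; positivity
  have hU0 : 0 ≤ ∫ x, ‖x‖ ^ (2 * τ + 2) * u x ^ 2 := integral_nonneg fun x => by positivity
  clear H heq hG
  generalize (∫ x, ‖x‖ ^ (2 * τ) * u x ^ 2) = U' at *
  generalize (∫ x, ‖x‖ ^ (2 * τ + 2) * u x ^ 2) = U at *
  generalize (∫ x, q x * ‖x‖ ^ (2 * τ + 2) * u x ^ 2) = Q at *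
  generalize (∫ x, ‖x‖ ^ (2 * τ + 2) * gsq u x) = G at *
  generalize (∫ x, ‖x‖ ^ (2 * τ + 4) * f x ^ 2) = N at *
  have hP : ∀ j, 0 ≤ ∫ x, ‖x‖ ^ (2 * τ + 2) * F j x ^ 2 := hP0
  set P : Fin n → ℝ := fun j => ∫ x, ‖x‖ ^ (2 * τ + 2) * F j x ^ 2 with hPd
  set m := max τ k with hm
  have hmτ : τ ≤ m := le_max_left _ _
  have hm1 : 1 ≤ m := by linarith
  set S := ∑ j, √(P j) with hS
  have hS0 : 0 ≤ S := Finset.sum_nonneg fun j _ => Real.sqrt_nonneg _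
  have hPS : ∑ j, P j ≤ S ^ 2 := by
    have := Finset.sum_sq_le_sq_sum_of_nonneg (s := Finset.univ) (f := fun j => √(P j))
      (fun j _ => Real.sqrt_nonneg _)
    refine le_trans (le_of_eq ?_) this
    exact Finset.sum_congr rfl fun j _ => (Real.sq_sqrt (hP j)).symm
  have hPn : 0 ≤ ∑ j, P j := Finset.sum_nonneg fun j _ => hP j
  obtain ⟨Ka, Kb⟩ := K2
  change τ ^ 2 * U ≤ C₁ * (N + m ^ 2 * ∑ j, P j) at Ka
  change τ * k ^ 2 * Q ≤ C₁ * (N + m ^ 2 * ∑ j, P j) at Kb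
  change 1 / 2 * G ≤ k ^ 2 * Q + (2 * (2 * τ + 2) ^ 2 + 1/2) * U + 1/2 * N + 5/4 * ∑ j, P j at KG
  change τ * √U' + √G + √τ * k * √Q ≤ 3 * √(40 * C₁ + 4) * (√N + m * ∑ j, √(P j))
  have hm2 : 1 ≤ m ^ 2 := by nlinarith
  have hΦm : ∑ j, P j ≤ m ^ 2 * ∑ j, P j := by nlinarith
  set R := N + m ^ 2 * ∑ j, P j with hR
  have hR0 : 0 ≤ R := by positivity
  have hCR : 0 ≤ C₁ * R := by positivity
  set Z := √N + m * ∑ j, √(P j) with hZ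
  have hZ0 : 0 ≤ Z := by positivity
  have hRZ : R ≤ Z ^ 2 := by
    have h1 : √N ^ 2 = N := Real.sq_sqrt hN0
    have h2 : 0 ≤ √N * (m * S) := by positivity
    have h3 : m ^ 2 * ∑ j, P j ≤ m ^ 2 * S ^ 2 := by gcongr
    rw [hR, hZ, ← hS]
    nlinarith
  have fin : ∀ X, X ≤ (40 * C₁ + 4) * R → √X ≤ √(40 * C₁ + 4) * Z := by
    intro X hX
    have h1 : √X ≤ √((40 * C₁ + 4) * Z ^ 2) :=
      Real.sqrt_le_sqrt (hX.trans (by gcongr))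
    rwa [Real.sqrt_mul (by positivity), Real.sqrt_sq hZ0] at h1
  have a1 : τ * √U' ≤ √(40 * C₁ + 4) * Z := by
    have : τ * √U' = √(τ ^ 2 * U') := by
      rw [Real.sqrt_mul (by positivity), Real.sqrt_sq (by linarith)]
    rw [this]
    refine fin _ ?_
    have : τ ^ 2 * U' ≤ τ ^ 2 * U := by gcongr
    linarith
  have a3 : √τ * k * √Q ≤ √(40 * C₁ + 4) * Z := by
    have : √τ * k * √Q = √(τ * k ^ 2 * Q) := by
      rw [Real.sqrt_mul (by positivity), Real.sqrt_mul (by linarith), Real.sqrt_sq (by linarith)]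
    rw [this]
    refine fin _ ?_
    linarith
  have a2 : √G ≤ √(40 * C₁ + 4) * Z := by
    refine fin _ ?_
    have h1 : k ^ 2 * Q ≤ τ * k ^ 2 * Q := by
      have : 0 ≤ k ^ 2 * Q := by positivity
      nlinarith
    have h2 : (2 * (2 * τ + 2) ^ 2 + 1/2) * U ≤ 19 * (τ ^ 2 * U) := by
      rw [← mul_assoc]
      gcongr
      nlinarith
    have h3 : N + 5/2 * ∑ j, P j ≤ 4 * R := by
      rw [hR]; linarith
    linarith
  linarith
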